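/- arXiv:1009.2935 — 3 statements merged into one kernel-verified Lean document; each statement's English description precedes it below -/
import Mathlib

section
/- For n ≥ 2, the space D_n(Δ^n) is a connected 1-dimensional cell complex, and the rank of its first homology group H_1(D_n(Δ^n); ℤ) equals (1/2)(n−2)(n+1)! + 1. -/
/-!
`DConf n (n + 1)` is a finite graph, and the first homology of a connected finite graph has rank
`#edges - #vertices + 1`. The vertices are the `(n + 1)!` permutations `σ` of the `n + 1` vertices
of the simplex: the `i`-th point sits at `σ i.castSucc`, and `σ (last n)` is the one unoccupied
vertex. At `σ` exactly `n` moves are possible, since any of the `n` points can travel along the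
edge to the unoccupied vertex; so the graph is `n`-regular and `2 * #edges = n * (n + 1)!`, which
gives the rank `(n - 2) * (n + 1)! / 2 + 1`. The `i`-th move replaces `σ` by
`σ * swap i.castSucc (last n)`, and these transpositions generate the symmetric group, so the graph
is connected.

The homology in question is the singular one, so it has to be identified with the cycle group of
the graph. This is done for an abstract `GraphModel`: a space with vertices, edges, an open cover
by contractible stars, and for each edge a map to the circle collapsing everything outside that
edge. The chain map sending each edge to its characteristic singular simplex induces a map from
the kernel of the cellular boundary to singular `H₁` (`GraphModel.nonempty_equiv`).

* Injectivity: lifting singular simplices along `ℝ → ℝ / ℤ` turns every circle-valued map into a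
  real cocycle that measures winding (`exists_cocycle`). The cocycle of the collapsing map of `e`
  reads off the coefficient of `e` in an edge chain, hence a bounding edge chain vanishes.
* Surjectivity: modulo boundaries and edge chains, each point `x` has a well-defined potential
  `pot x`, the class of the part of its edge between the source and `x`. A path within a star is
  homologous to the difference of the potentials of its endpoints (`seg_star`), as one sees by
  contracting the star. Subdividing, the same holds for every path (`mk_single`), so every
  singular `1`-cycle is an edge chain plus a boundary.
-/

open scoped BigOperators

/-- The discretized configuration space of `k` points on the simplex with `N` vertices
(i.e. `D_k(Δ^(N-1))`), realized geometrically: tuples of points of the standard simplex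
whose supports (the vertex sets of the open cells containing them, equivalently the
vertex sets of the closures of those cells) are pairwise disjoint. -/
def DConf (k N : ℕ) : Set (Fin k → Fin N → ℝ) :=
  {x | (∀ i, x i ∈ stdSimplex ℝ (Fin N)) ∧
    ∀ i j : Fin k, i ≠ j → Disjoint (Function.support (x i)) (Function.support (x j))}

open CategoryTheory in
/-- Singular homology of a topological space with integer coefficients, as the homology of
the complex of singular chains (the alternating face map complex of the free simplicial
`ℤ`-module on the singular simplicial set). -/
noncomputable def SingularHomology (X : Type) [TopologicalSpace X] (r : ℕ) : ModuleCat ℤ :=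
  ((AlgebraicTopology.alternatingFaceMapComplex (ModuleCat ℤ)).obj
      (((CategoryTheory.SimplicialObject.whiskering (Type) (ModuleCat ℤ)).obj
          (ModuleCat.free ℤ)).obj (TopCat.toSSet.obj (TopCat.of X)))).homology r

/-! ### Singular chains in low degrees -/

/-- The topological standard `n`-simplex. -/
abbrev TSimp (n : ℕ) : Type := stdSimplex ℝ (Fin (n + 1))

/-- The `i`-th face inclusion. -/
noncomputable def faceMap (n : ℕ) (i : Fin (n + 2)) : C(TSimp n, TSimp (n + 1)) :=
  ⟨stdSimplex.map i.succAbove, stdSimplex.continuous_map _⟩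

/-- Singular `n`-chains of `X` with integer coefficients. -/
abbrev SChain (X : Type) [TopologicalSpace X] (n : ℕ) : Type := C(TSimp n, X) →₀ ℤ

/-- The singular boundary map, the alternating sum of the faces. -/
noncomputable def sBdry (X : Type) [TopologicalSpace X] (n : ℕ) :
    SChain X (n + 1) →ₗ[ℤ] SChain X n :=
  ∑ i : Fin (n + 2), (-1 : ℤ) ^ (i : ℕ) •
    Finsupp.lmapDomain ℤ ℤ (fun σ : C(TSimp (n + 1), X) => σ.comp (faceMap n i))

section Bridge
open CategoryTheory

/-- The free module on the singular simplicial set in degree `n`, written with continuous maps. -/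
noncomputable def sChainEquiv (X : Type) [TopologicalSpace X] (n : ℕ) :
    (ModuleCat.free ℤ).obj ((TopCat.toSSet.obj (TopCat.of X)).obj (.op (.mk n))) ≃ₗ[ℤ] SChain X n :=
  Finsupp.domLCongr (TopCat.toSSetObjEquiv (TopCat.of X) (.op (.mk n)))

/-- The complex whose homology is `SingularHomology X`. -/
noncomputable abbrev sComplex (X : Type) [TopologicalSpace X] : ChainComplex (ModuleCat ℤ) ℕ :=
  (AlgebraicTopology.alternatingFaceMapComplex (ModuleCat ℤ)).obj
      (((CategoryTheory.SimplicialObject.whiskering (Type) (ModuleCat ℤ)).obj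
          (ModuleCat.free ℤ)).obj (TopCat.toSSet.obj (TopCat.of X)))

lemma sChainEquiv_d (X : Type) [TopologicalSpace X] (n : ℕ)
    (c : (sComplex X).X (n + 1)) :
    sChainEquiv X n ((sComplex X).d (n + 1) n c) = sBdry X n (sChainEquiv X (n + 1) c) := by
  rw [AlgebraicTopology.alternatingFaceMapComplex_obj_d]
  have key (i : Fin (n + 2)) : (ModuleCat.free ℤ).map ((TopCat.toSSet.obj (TopCat.of X)).δ i) ≫
      ModuleCat.ofHom (sChainEquiv X n).toLinearMap =
      ModuleCat.ofHom (sChainEquiv X (n + 1)).toLinearMap ≫ ModuleCat.ofHom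
        (Finsupp.lmapDomain ℤ ℤ (fun σ : C(TSimp (n + 1), X) => σ.comp (faceMap n i))) := by
    apply ModuleCat.free_hom_ext
    intro x
    simp only [ConcreteCategory.comp_apply]
    refine (congrArg (sChainEquiv X n) (ModuleCat.free_map_apply _ x)).trans ?_
    refine (Finsupp.equivMapDomain_single _ _ _).trans ?_
    refine Eq.trans ?_ (congrArg (Finsupp.mapDomain
      (fun σ : C(TSimp (n + 1), X) => σ.comp (faceMap n i)))
      (Finsupp.equivMapDomain_single _ _ _)).symm
    refine Eq.trans ?_ (Finsupp.mapDomain_single).symm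
    congr 1
  have : ModuleCat.ofHom (sChainEquiv X (n + 1)).toLinearMap ≫ ModuleCat.ofHom (sBdry X n) =
      AlgebraicTopology.AlternatingFaceMapComplex.objD
        (((CategoryTheory.SimplicialObject.whiskering (Type) (ModuleCat ℤ)).obj
          (ModuleCat.free ℤ)).obj (TopCat.toSSet.obj (TopCat.of X))) n ≫
        ModuleCat.ofHom (sChainEquiv X n).toLinearMap := by
    have h2 : ModuleCat.ofHom (sBdry X n) = ∑ i : Fin (n + 2), (-1 : ℤ) ^ (i : ℕ) •
      ModuleCat.ofHom (Finsupp.lmapDomain ℤ ℤ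
        (fun σ : C(TSimp (n + 1), X) => σ.comp (faceMap n i))) := by
      apply ModuleCat.hom_ext
      simp only [ModuleCat.hom_sum, ModuleCat.hom_zsmul, ModuleCat.hom_ofHom, sBdry]
    rw [h2, AlgebraicTopology.AlternatingFaceMapComplex.objD]
    refine (Preadditive.comp_sum _ _ _).trans
      (Eq.trans (Finset.sum_congr rfl fun i _ => ?_) (Preadditive.sum_comp _ _ _).symm)
    refine (Preadditive.comp_zsmul _ _ _).trans (Eq.trans ?_ (Preadditive.zsmul_comp _ _ _).symm)
    exact congrArg _ (key i).symm
  exact (congr($this c)).symm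

lemma sBdry_comp (X : Type) [TopologicalSpace X] : sBdry X 0 ∘ₗ sBdry X 1 = 0 := by
  ext1 σ
  let c : (sComplex X).X 2 := (sChainEquiv X 2).symm (.single σ 1)
  have hc : sChainEquiv X 2 c = .single σ 1 := LinearEquiv.apply_symm_apply _ _
  have h1 : sChainEquiv X 1 ((sComplex X).d 2 1 c) = sBdry X 1 (.single σ 1) :=
    (sChainEquiv_d X 1 c).trans (congrArg _ hc)
  have h2 := sChainEquiv_d X 0 ((sComplex X).d 2 1 c)
  have h3 : (sComplex X).d 1 0 ((sComplex X).d 2 1 c) = 0 :=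
    congr($((sComplex X).d_comp_d 2 1 0) c)
  refine LinearMap.ext_ring ?_
  exact (congrArg (sBdry X 0) h1).symm.trans (h2.symm.trans
    ((congrArg (sChainEquiv X 0) h3).trans (map_zero (sChainEquiv X 0))))

/-- First singular homology as cycles modulo boundaries. -/
noncomputable def singularHomologyEquiv (X : Type) [TopologicalSpace X] :
    SingularHomology X 1 ≃ₗ[ℤ] LinearMap.ker (sBdry X 0) ⧸
      (LinearMap.range (sBdry X 1)).submoduleOf (LinearMap.ker (sBdry X 0)) := by
  let K := sComplex X
  let S : ShortComplex (ModuleCat ℤ) := ShortComplex.mk (ModuleCat.ofHom (sBdry X 1))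
    (ModuleCat.ofHom (sBdry X 0)) (by rw [← ModuleCat.ofHom_comp, sBdry_comp]; rfl)
  let e : K.sc 1 ≅ S := K.isoSc' 2 1 0 (by simp) (by simp) ≪≫
    ShortComplex.isoMk (LinearEquiv.toModuleIso (sChainEquiv X 2))
      (LinearEquiv.toModuleIso (sChainEquiv X 1)) (LinearEquiv.toModuleIso (sChainEquiv X 0))
      (ModuleCat.hom_ext (LinearMap.ext fun c => (sChainEquiv_d X 1 c).symm))
      (ModuleCat.hom_ext (LinearMap.ext fun c => (sChainEquiv_d X 0 c).symm))
  let f : SingularHomology X 1 ≃ₗ[ℤ] S.moduleCatLeftHomologyData.H :=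
    (ShortComplex.homologyMapIso e ≪≫ S.moduleCatHomologyIso).toLinearEquiv
  refine f.trans (Submodule.quotEquivOfEq _ _ ?_)
  ext x
  constructor
  · rintro ⟨y, rfl⟩
    exact ⟨y, rfl⟩
  · rintro ⟨y, hy⟩
    exact ⟨y, Subtype.ext hy⟩

end Bridge

/-! ### Classes of straight segments -/

section Segments

variable {X : Type} [TopologicalSpace X]

lemma sBdry_zero_single (σ : C(TSimp 1, X)) :
    sBdry X 0 (.single σ 1) = .single (ContinuousMap.const _ (σ (stdSimplex.vertex 1))) 1
      - .single (ContinuousMap.const _ (σ (stdSimplex.vertex 0))) 1 := by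
  have h (i : Fin 2) : σ.comp (faceMap 0 i) =
      ContinuousMap.const _ (σ (stdSimplex.vertex (i.succAbove 0))) := by
    ext t
    have : t = stdSimplex.vertex 0 := Subsingleton.elim _ _
    subst this
    exact congrArg σ (stdSimplex.map_vertex _ _)
  simp [sBdry, h, sub_eq_add_neg, Fin.sum_univ_two]

lemma sBdry_one_single (σ : C(TSimp 2, X)) :
    sBdry X 1 (.single σ 1) = .single (σ.comp (faceMap 1 0)) 1
      - .single (σ.comp (faceMap 1 1)) 1 + .single (σ.comp (faceMap 1 2)) 1 := by
  simp [sBdry, Fin.sum_univ_three, sub_eq_add_neg]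

variable {E : Type*} [AddCommGroup E] [Module ℝ E] [TopologicalSpace E]
  [IsTopologicalAddGroup E] [ContinuousSMul ℝ E]

/-- The affine singular simplex with vertices `p`. -/
noncomputable def affSimp {k : ℕ} (p : Fin (k + 1) → E) : C(TSimp k, E) where
  toFun t := ∑ i, t i • p i
  continuous_toFun := by
    refine continuous_finsetSum _ fun i _ => Continuous.smul ?_ continuous_const
    exact (continuous_apply i).comp continuous_subtype_val

lemma affSimp_comp_faceMap {k : ℕ} (p : Fin (k + 2) → E) (i : Fin (k + 2)) :
    (affSimp p).comp (faceMap k i) = affSimp (p ∘ i.succAbove) := by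
  ext t
  simp [affSimp, faceMap, FunOnFinite.linearMap_apply_apply, Finset.sum_smul]
  rw [Finset.sum_comm' (t' := Finset.univ) (s' := fun x => {i.succAbove x})]
  · simp
  · simp [eq_comm]

/-- For `G : E → X` on a vector space, the class modulo `P` of the singular `1`-simplex that is the
image under `G` of the straight segment from `a` to `b`. -/
noncomputable def seg (P : Submodule ℤ (SChain X 1)) (G : C(E, X)) (a b : E) : SChain X 1 ⧸ P :=
  P.mkQ (.single (G.comp (affSimp ![a, b])) 1)

variable {P : Submodule ℤ (SChain X 1)}

/-- The affine triangle with vertices `a`, `b`, `c` is mapped by `G` to a relation. -/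
lemma seg_add (hP : LinearMap.range (sBdry X 1) ≤ P) (G : C(E, X)) (a b c : E) :
    seg P G a b + seg P G b c = seg P G a c := by
  have h0 : sBdry X 1 (.single (G.comp (affSimp ![a, b, c])) 1) ∈ P := hP ⟨_, rfl⟩
  rw [sBdry_one_single, ← Submodule.Quotient.mk_eq_zero] at h0
  simp only [ContinuousMap.comp_assoc, affSimp_comp_faceMap] at h0
  have e0 : ![a, b, c] ∘ (0 : Fin 3).succAbove = ![b, c] := by
    ext i; fin_cases i <;> rfl
  have e1 : ![a, b, c] ∘ (1 : Fin 3).succAbove = ![a, c] := by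
    ext i; fin_cases i <;> rfl
  have e2 : ![a, b, c] ∘ (2 : Fin 3).succAbove = ![a, b] := by
    ext i; fin_cases i <;> rfl
  rw [e0, e1, e2] at h0
  have h1 : seg P G b c - seg P G a c + seg P G a b = 0 := h0
  refine sub_eq_zero.1 (Eq.trans ?_ h1)
  abel

lemma seg_self (hP : LinearMap.range (sBdry X 1) ≤ P) (G : C(E, X)) (a : E) :
    seg P G a a = 0 := by
  simpa using seg_add hP G a a a

/-- `seg P G a b` depends only on the path `t ↦ G ((1 - t) • a + t • b)` on `[0, 1]`; the ambient
vector space may change. -/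
lemma seg_congr {E' : Type*} [AddCommGroup E'] [Module ℝ E'] [TopologicalSpace E']
    [IsTopologicalAddGroup E'] [ContinuousSMul ℝ E'] {G : C(E, X)} {G' : C(E', X)}
    {a b : E} {a' b' : E'}
    (h : ∀ t : ℝ, 0 ≤ t → t ≤ 1 → G ((1 - t) • a + t • b) = G' ((1 - t) • a' + t • b')) :
    seg P G a b = seg P G' a' b' := by
  have : G.comp (affSimp ![a, b]) = G'.comp (affSimp ![a', b']) := by
    ext t
    have h0 : t 0 = 1 - t 1 := by linarith [stdSimplex.add_eq_one t]
    have := h (t 1) (stdSimplex.zero_le t 1) (stdSimplex.le_one t 1)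
    simpa [affSimp, Fin.sum_univ_two, h0] using this
  rw [seg, seg, this]

/-- The parametrization `[0, 1] → Δ¹`, extended to be constant on either side of `[0, 1]`. -/
noncomputable def ofReal : C(ℝ, TSimp 1) where
  toFun t := ⟨![1 - Set.projIcc 0 1 zero_le_one t, Set.projIcc (0 : ℝ) 1 zero_le_one t], by
    have := (Set.projIcc (0 : ℝ) 1 zero_le_one t).2
    constructor
    · intro i; fin_cases i <;> simp [this.1, this.2]
    · simp [Fin.sum_univ_two]⟩
  continuous_toFun := by
    refine Continuous.subtype_mk (continuous_pi fun i => ?_) _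
    have : Continuous fun t => (Set.projIcc (0 : ℝ) 1 zero_le_one t : ℝ) :=
      continuous_subtype_val.comp continuous_projIcc
    fin_cases i
    · exact continuous_const.sub this
    · exact this

lemma comp_ofReal_aff (σ : C(TSimp 1, X)) : (σ.comp ofReal).comp (affSimp ![0, 1]) = σ := by
  ext t
  have h0 : t 0 = 1 - t 1 := by linarith [stdSimplex.add_eq_one t]
  have : ofReal (t 1) = t := by
    ext i
    have := Set.projIcc_of_mem (zero_le_one (α := ℝ))
      ⟨stdSimplex.zero_le t 1, stdSimplex.le_one t 1⟩
    fin_cases i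
    · exact (congrArg (fun z : Set.Icc (0:ℝ) 1 => 1 - (z : ℝ)) this).trans h0.symm
    · exact congrArg (fun z : Set.Icc (0:ℝ) 1 => (z : ℝ)) this
  simp [affSimp, Fin.sum_univ_two, this]

lemma ofReal_zero : ofReal 0 = stdSimplex.vertex 0 := by
  ext i; fin_cases i <;> simp [ofReal] <;> rfl

lemma ofReal_one : ofReal 1 = stdSimplex.vertex 1 := by
  ext i; fin_cases i <;> simp [ofReal] <;> rfl

end Segments

/-! ### The winding cocycle of a circle-valued map -/

section Cocycle
variable {X : Type} [TopologicalSpace X]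

instance (k : ℕ) : SimplyConnectedSpace (TSimp k) :=
  have := (convex_stdSimplex ℝ (Fin (k + 1))).contractibleSpace ⟨_, (stdSimplex.vertex 0).2⟩
  inferInstance

instance (k : ℕ) : LocallyPathConnectedSpace (TSimp k) :=
  (convex_stdSimplex ℝ (Fin (k + 1))).locallyPathConnectedSpace

lemma exists_lift {k : ℕ} (f : C(TSimp k, AddCircle (1 : ℝ))) :
    ∃ g : C(TSimp k, ℝ), ∀ t, (g t : AddCircle (1 : ℝ)) = f t := by
  obtain ⟨e, he⟩ := QuotientAddGroup.mk_surjective (f (stdSimplex.vertex 0))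
  obtain ⟨g, ⟨-, hg⟩, -⟩ := (AddCircle.isCoveringMap_coe (1 : ℝ)).existsUnique_continuousMap_lifts
    f (stdSimplex.vertex 0) e he
  exact ⟨g, fun t => congrFun hg t⟩

/-- Two lifts of the same map differ by a constant: the difference is continuous and
integer-valued. -/
lemma lift_unique {g g' : C(TSimp 1, ℝ)}
    (h : ∀ t, (g t : AddCircle (1 : ℝ)) = (g' t : AddCircle (1 : ℝ))) (a b : TSimp 1) :
    g a - g b = g' a - g' b := by
  have hZ (t) : ∃ n : ℤ, (n : ℝ) = g t - g' t := by
    have := sub_eq_zero.2 (h t)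
    rw [← AddCircle.coe_sub, AddCircle.coe_eq_zero_iff] at this
    simpa using this
  choose n hn using hZ
  have hc : Continuous n := by
    rw [Int.isClosedEmbedding_coe_real.continuous_iff]
    exact (g.continuous.sub g'.continuous).congr fun t => (hn t).symm
  have := congrArg (Int.cast (R := ℝ))
    (PreconnectedSpace.constant inferInstance hc (x := a) (y := b))
  rw [hn, hn] at this
  linarith

/-- The pull-back of the fundamental cocycle of the circle along `f`: on a singular `1`-simplex its
value is the increment of any real lift. It kills boundaries because `f ∘ σ` lifts to `ℝ` for every
singular `2`-simplex `σ`. -/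
lemma exists_cocycle (f : C(X, AddCircle (1 : ℝ))) :
    ∃ φ : SChain X 1 →ₗ[ℤ] ℝ, φ ∘ₗ sBdry X 1 = 0 ∧
      ∀ (σ : C(TSimp 1, X)) (g : C(TSimp 1, ℝ)), (∀ t, (g t : AddCircle (1 : ℝ)) = f (σ t)) →
        φ (.single σ 1) = g (stdSimplex.vertex 1) - g (stdSimplex.vertex 0) := by
  choose L hL using fun σ : C(TSimp 1, X) => exists_lift (f.comp σ)
  let φ : SChain X 1 →ₗ[ℤ] ℝ := Finsupp.linearCombination ℤ
    fun σ => L σ (stdSimplex.vertex 1) - L σ (stdSimplex.vertex 0)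
  have hφ : ∀ (σ : C(TSimp 1, X)) (g : C(TSimp 1, ℝ)),
      (∀ t, (g t : AddCircle (1 : ℝ)) = f (σ t)) →
        φ (.single σ 1) = g (stdSimplex.vertex 1) - g (stdSimplex.vertex 0) := by
    intro σ g hg
    simp only [φ, Finsupp.linearCombination_single, one_smul]
    exact lift_unique (fun t => (hL σ t).trans (hg t).symm) _ _
  refine ⟨φ, ?_, hφ⟩
  ext1 σ
  refine LinearMap.ext_ring ?_
  obtain ⟨F, hF⟩ := exists_lift (f.comp σ)
  have h (i : Fin 3) : φ (.single (σ.comp (faceMap 1 i)) 1) =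
      F (stdSimplex.vertex (i.succAbove 1)) - F (stdSimplex.vertex (i.succAbove 0)) := by
    rw [hφ _ (F.comp (faceMap 1 i)) (fun t => hF _)]
    simp only [ContinuousMap.comp_apply, faceMap, ContinuousMap.coe_mk, stdSimplex.map_vertex]
  simp only [LinearMap.comp_apply, Finsupp.lsingle_apply, sBdry_one_single, map_add, map_sub, h]
  simp [Fin.succAbove, Fin.lt_def]

end Cocycle

/-! ### Singular homology of a graph -/

/-- A presentation of the space `X` as a graph with vertex set `V` and edge set `E`. Edges are
oriented, and `edge e` matters only on `[0, 1]`. The open stars of the vertices cover `X`;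
`contr v` contracts the star of `v` to `v` inside `X`, moving each point along an edge to an end of
that edge. The map `collapse e` to the circle `ℝ / ℤ` is the coordinate on the edge `e` and sends
all other edges to the base point. -/
structure GraphModel (X V E : Type) [TopologicalSpace X] where
  vtx : V → X
  vtx_inj : Function.Injective vtx
  src : E → V
  tgt : E → V
  edge : E → C(ℝ, X)
  edge_zero : ∀ e, edge e 0 = vtx (src e)
  edge_one : ∀ e, edge e 1 = vtx (tgt e)
  star : V → Set X
  star_open : ∀ v, IsOpen (star v)
  star_cover : ∀ x, ∃ v, x ∈ star v
  contr : ∀ v, C(star v × ℝ, X)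
  contr_zero : ∀ v x, contr v (x, 0) = x
  contr_one : ∀ v x, contr v (x, 1) = vtx v
  contr_edge : ∀ v x, ∃ e, ∃ a ∈ Set.Icc (0 : ℝ) 1, ∃ b : ℝ, (b = 0 ∨ b = 1) ∧
    ∀ u ∈ Set.Icc (0 : ℝ) 1, contr v (x, u) = edge e ((1 - u) * a + u * b)
  collapse : E → C(X, AddCircle (1 : ℝ))
  collapse_self : ∀ e, ∀ t ∈ Set.Icc (0 : ℝ) 1, collapse e (edge e t) = (t : AddCircle (1 : ℝ))
  collapse_ne : ∀ e e', e ≠ e' → ∀ t ∈ Set.Icc (0 : ℝ) 1, collapse e (edge e' t) = 0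

namespace GraphModel

variable {X V E : Type} [TopologicalSpace X] (M : GraphModel X V E)

/-- The edge as a singular simplex. -/
noncomputable def edgeSimp (e : E) : C(TSimp 1, X) := (M.edge e).comp (affSimp ![0, 1])

/-- The singular chain of a cellular `1`-chain. -/
noncomputable def edgeChain : (E →₀ ℤ) →ₗ[ℤ] SChain X 1 :=
  Finsupp.lmapDomain ℤ ℤ M.edgeSimp

/-- The cellular boundary map of the graph. -/
noncomputable def bdry : (E →₀ ℤ) →ₗ[ℤ] (V →₀ ℤ) :=
  Finsupp.lmapDomain ℤ ℤ M.tgt - Finsupp.lmapDomain ℤ ℤ M.src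

/-- The singular chain of a cellular `0`-chain. -/
noncomputable def vtxChain : (V →₀ ℤ) →ₗ[ℤ] SChain X 0 :=
  Finsupp.lmapDomain ℤ ℤ fun v => ContinuousMap.const _ (M.vtx v)

lemma vtxChain_injective : Function.Injective M.vtxChain :=
  Finsupp.mapDomain_injective fun _ _ h =>
    M.vtx_inj (congrArg (fun f : C(TSimp 0, X) => f (stdSimplex.vertex 0)) h)

lemma sBdry_edgeChain (c : E →₀ ℤ) : sBdry X 0 (M.edgeChain c) = M.vtxChain (M.bdry c) := by
  have : sBdry X 0 ∘ₗ M.edgeChain = M.vtxChain ∘ₗ M.bdry := by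
    ext1 e
    refine LinearMap.ext_ring ?_
    simp only [edgeChain, bdry, vtxChain, LinearMap.comp_apply, Finsupp.lsingle_apply,
      LinearMap.sub_apply, map_sub, Finsupp.lmapDomain_apply, Finsupp.mapDomain_single,
      sBdry_zero_single]
    simp [edgeSimp, affSimp, Fin.sum_univ_two, M.edge_zero, M.edge_one]
  exact congr($this c)

/-- A cellular `1`-chain that bounds singularly is zero: the winding cocycle of `collapse e` takes
it to its coefficient at `e`. -/
lemma edgeChain_mem_range {c : E →₀ ℤ} (h : M.edgeChain c ∈ LinearMap.range (sBdry X 1)) :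
    c = 0 := by
  ext e
  obtain ⟨φ, hφ, hφ'⟩ := exists_cocycle (M.collapse e)
  have key : φ ∘ₗ M.edgeChain =
      (Int.castAddHom ℝ).toIntLinearMap ∘ₗ (Finsupp.lapply e : (E →₀ ℤ) →ₗ[ℤ] ℤ) := by
    ext1 e'
    refine LinearMap.ext_ring ?_
    have ht (t : TSimp 1) : t 1 ∈ Set.Icc (0 : ℝ) 1 :=
      ⟨stdSimplex.zero_le t 1, stdSimplex.le_one t 1⟩
    have hs (t : TSimp 1) : M.edgeSimp e' t = M.edge e' (t 1) := by
      simp [edgeSimp, affSimp, Fin.sum_univ_two]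
    have hc : φ (M.edgeChain (.single e' 1)) = φ (.single (M.edgeSimp e') 1) := by
      simp [edgeChain]
    by_cases he : e = e'
    · subst he
      have := hφ' (M.edgeSimp e) (affSimp ![0, 1]) (fun t => by
        rw [hs, M.collapse_self _ _ (ht t)]
        simp [affSimp, Fin.sum_univ_two])
      simp only [LinearMap.comp_apply, Finsupp.lsingle_apply, hc, this]
      simp [affSimp, Fin.sum_univ_two]
    · have := hφ' (M.edgeSimp e') 0 (fun t => by
        rw [hs, M.collapse_ne _ _ he _ (ht t)]
        simp)
      simp only [LinearMap.comp_apply, Finsupp.lsingle_apply, hc, this]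
      simp [Ne.symm he]
  obtain ⟨y, hy⟩ := h
  have h1 : φ (M.edgeChain c) = 0 := by rw [← hy]; exact congr($hφ y)
  have h2 : φ (M.edgeChain c) = (c e : ℝ) := congr($key c)
  rw [h1] at h2
  exact_mod_cast h2.symm

/-- The submodule of singular `1`-chains generated by the boundaries and the edges. -/
noncomputable def P : Submodule ℤ (SChain X 1) :=
  LinearMap.range (sBdry X 1) ⊔ LinearMap.range M.edgeChain

lemma range_le_P : LinearMap.range (sBdry X 1) ≤ M.P := le_sup_left

lemma seg_edge (e : E) {b : ℝ} (hb : b = 0 ∨ b = 1) : seg M.P (M.edge e) 0 b = 0 := by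
  rcases hb with rfl | rfl
  · exact seg_self M.range_le_P _ _
  · refine (Submodule.Quotient.mk_eq_zero _).2 (Submodule.mem_sup_right ⟨.single e 1, ?_⟩)
    simp [edgeChain, edgeSimp]

lemma exists_edge (x : X) : ∃ e, ∃ a ∈ Set.Icc (0 : ℝ) 1, x = M.edge e a := by
  obtain ⟨v, hv⟩ := M.star_cover x
  obtain ⟨e, a, ha, b, -, h⟩ := M.contr_edge v ⟨x, hv⟩
  refine ⟨e, a, ha, ?_⟩
  simpa [M.contr_zero] using h 0 (by simp)

lemma coe_eq_zero_Icc {a : ℝ} (ha : a ∈ Set.Icc (0 : ℝ) 1) (h : (a : AddCircle (1 : ℝ)) = 0) :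
    a = 0 ∨ a = 1 := by
  rw [AddCircle.coe_eq_zero_iff] at h
  obtain ⟨n, hn⟩ := h
  simp only [zsmul_eq_mul, mul_one] at hn
  subst hn
  have h0 : 0 ≤ n := by exact_mod_cast ha.1
  have h1 : n ≤ 1 := by exact_mod_cast ha.2
  interval_cases n <;> simp

/-- A point may lie on several edges only as an end of each of them, so the class of the initial part
of its edge is independent of the chosen edge and parameter. -/
lemma seg_edge_wd {e e' : E} {a a' : ℝ} (ha : a ∈ Set.Icc (0 : ℝ) 1)
    (ha' : a' ∈ Set.Icc (0 : ℝ) 1) (h : M.edge e a = M.edge e' a') :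
    seg M.P (M.edge e) 0 a = seg M.P (M.edge e') 0 a' := by
  by_cases he : e = e'
  · subst he
    have h1 := congrArg (M.collapse e) h
    rw [M.collapse_self _ _ ha, M.collapse_self _ _ ha'] at h1
    by_cases haa : a = a'
    · rw [haa]
    · have key : ∀ a a' : ℝ, a ∈ Set.Icc (0 : ℝ) 1 → a' ∈ Set.Icc (0 : ℝ) 1 → a' < a →
          (a : AddCircle (1 : ℝ)) = a' → a = 1 ∧ a' = 0 := by
        intro a a' ha ha' hlt h
        have := sub_eq_zero.2 h
        rw [← AddCircle.coe_sub] at this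
        have := coe_eq_zero_Icc ⟨by linarith, by linarith [ha.2, ha'.1]⟩ this
        constructor <;> rcases this with h | h <;> linarith [ha.2, ha'.1]
      rcases lt_or_gt_of_ne haa with hlt | hlt
      · obtain ⟨rfl, rfl⟩ := key a' a ha' ha hlt h1.symm
        rw [M.seg_edge e (.inl rfl), M.seg_edge e (.inr rfl)]
      · obtain ⟨rfl, rfl⟩ := key a a' ha ha' hlt h1
        rw [M.seg_edge e (.inl rfl), M.seg_edge e (.inr rfl)]
  · have h1 := congrArg (M.collapse e) h
    rw [M.collapse_self _ _ ha, M.collapse_ne _ _ he _ ha'] at h1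
    have h2 := congrArg (M.collapse e') h
    rw [M.collapse_self _ _ ha', M.collapse_ne _ _ (Ne.symm he) _ ha] at h2
    rw [M.seg_edge e (coe_eq_zero_Icc ha h1), M.seg_edge e' (coe_eq_zero_Icc ha' h2.symm)]

/-- The potential of `x`: the class modulo `P` of the segment from the source of an edge through `x`
to `x`. -/
noncomputable def pot (x : X) : SChain X 1 ⧸ M.P :=
  seg M.P (M.edge (M.exists_edge x).choose) 0 (M.exists_edge x).choose_spec.choose

lemma pot_edge (e : E) {a : ℝ} (ha : a ∈ Set.Icc (0 : ℝ) 1) :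
    M.pot (M.edge e a) = seg M.P (M.edge e) 0 a :=
  let h := (M.exists_edge (M.edge e a)).choose_spec.choose_spec
  M.seg_edge_wd h.1 ha h.2.symm

/-- The track of `x` under the contraction runs from `x` to an end of its edge, and that end has
potential zero. -/
lemma seg_contr (v : V) (x : M.star v) :
    seg M.P ((M.contr v).comp ((ContinuousMap.const ℝ x).prodMk (.id ℝ))) 0 1 = - M.pot x := by
  obtain ⟨e, a, ha, b, hb, h⟩ := M.contr_edge v x
  have hx : (x : X) = M.edge e a := by simpa [M.contr_zero] using h 0 (by simp)
  rw [hx, M.pot_edge e ha, eq_neg_iff_add_eq_zero, ← M.seg_edge e hb,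
    ← seg_add M.range_le_P (M.edge e) 0 a b]
  refine (add_comm _ _).trans (congrArg _ ?_)
  refine seg_congr fun t h0 h1 => ?_
  simpa using h t ⟨h0, h1⟩

/-- A path in a star, in terms of the potential. -/
lemma seg_star (v : V) (G : C(ℝ, M.star v)) :
    seg M.P (ContinuousMap.comp ⟨_, continuous_subtype_val⟩ G) 0 1 =
      M.pot (G 1) - M.pot (G 0) := by
  -- Both triangles of the square traced out by contracting the path are boundaries: the bottom
  -- side is the path, the top side is constant at `v`, the vertical sides are contraction tracks.
  let F : C(ℝ × ℝ, X) := (M.contr v).comp (G.prodMap (.id ℝ))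
  have h1 := seg_add M.range_le_P F (0, 0) (1, 0) (1, 1)
  have h2 := seg_add M.range_le_P F (0, 0) (0, 1) (1, 1)
  have e1 : seg M.P F (0, 0) (1, 0) =
      seg M.P (ContinuousMap.comp ⟨_, continuous_subtype_val⟩ G) 0 1 :=
    seg_congr fun t _ _ => by simp [F, M.contr_zero]
  have e2 : seg M.P F (1, 0) (1, 1) = - M.pot (G 1) := by
    rw [← M.seg_contr v]
    exact seg_congr fun t _ _ => by simp [F]
  have e3 : seg M.P F (0, 0) (0, 1) = - M.pot (G 0) := by
    rw [← M.seg_contr v]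
    exact seg_congr fun t _ _ => by simp [F]
  have e4 : seg M.P F (0, 1) (1, 1) = 0 := by
    rw [← seg_self M.range_le_P F (0, 1)]
    exact seg_congr fun t _ _ => by simp [F, M.contr_one]
  rw [e1, e2, ← h2, e3, e4, add_zero] at h1
  refine sub_eq_zero.1 (Eq.trans ?_ (sub_eq_zero.2 h1))
  abel

/-- Modulo boundaries and edges, every singular `1`-simplex is the difference of the potentials of
its endpoints. -/
lemma mk_single (σ : C(TSimp 1, X)) : M.P.mkQ (.single σ 1) =
    M.pot (σ (stdSimplex.vertex 1)) - M.pot (σ (stdSimplex.vertex 0)) := by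
  let Γ : C(ℝ, X) := σ.comp ofReal
  have h0 : M.P.mkQ (.single σ 1) = seg M.P Γ 0 1 := by
    rw [seg, comp_ofReal_aff]
  rw [h0, ← ofReal_zero, ← ofReal_one]
  -- A Lebesgue subdivision of `[0, 1]` each piece of which is mapped into a single star.
  obtain ⟨t, ht0, htm, ⟨N, hN⟩, ht⟩ := exists_monotone_Icc_subset_open_cover_unitInterval
    (c := fun v => {t : unitInterval | Γ t ∈ M.star v})
    (fun v => (M.star_open v).preimage (Γ.continuous.comp continuous_subtype_val))
    (fun t _ => by
      obtain ⟨v, hv⟩ := M.star_cover (Γ t)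
      exact Set.mem_iUnion.2 ⟨v, hv⟩)
  have key (n : ℕ) : seg M.P Γ 0 (t n) = M.pot (Γ (t n)) - M.pot (Γ 0) := by
    induction n with
    | zero => simp [ht0, seg_self M.range_le_P]
    | succ n ih =>
      rw [← seg_add M.range_le_P _ _ (t n : ℝ) _, ih]
      obtain ⟨v, hv⟩ := ht n
      let r (s : ℝ) : ℝ := Set.projIcc (0 : ℝ) 1 zero_le_one s
      have hr : Continuous r := continuous_subtype_val.comp continuous_projIcc
      have hmem (s : ℝ) : Γ ((1 - r s) * t n + r s * t (n + 1)) ∈ M.star v := by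
        have hle : (t n : ℝ) ≤ t (n + 1) := htm n.le_succ
        have hr0 : 0 ≤ r s := (Set.projIcc (0 : ℝ) 1 zero_le_one s).2.1
        have hr1 : r s ≤ 1 := (Set.projIcc (0 : ℝ) 1 zero_le_one s).2.2
        have ha : (t n : ℝ) ≤ (1 - r s) * t n + r s * t (n + 1) := by nlinarith
        have hb : (1 - r s) * t n + r s * t (n + 1) ≤ (t (n + 1) : ℝ) := by nlinarith
        exact @hv ⟨_, (t n).2.1.trans ha, hb.trans (t (n + 1)).2.2⟩ ⟨ha, hb⟩
      let G : C(ℝ, M.star v) := ⟨fun s => ⟨_, hmem s⟩,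
        (Γ.continuous.comp (by fun_prop)).subtype_mk _⟩
      have r0 : r 0 = 0 := by simp [r]
      have r1 : r 1 = 1 := by simp [r]
      have hG := M.seg_star v G
      have hs : seg M.P Γ (t n) (t (n + 1)) =
          seg M.P (ContinuousMap.comp ⟨_, continuous_subtype_val⟩ G) 0 1 := by
        refine seg_congr fun s h0 h1 => ?_
        have : r s = s := by
          simp only [r]; rw [Set.projIcc_of_mem _ ⟨h0, h1⟩]
        simp [G, this]
      rw [hs, hG]
      simp [G, r0, r1]
  have := key N
  rwa [hN N le_rfl] at this

/-- By `mk_single`, the quotient map by `P` factors through the boundary map. -/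
lemma mem_P_of_cycle {z : SChain X 1} (hz : sBdry X 0 z = 0) : z ∈ M.P := by
  let Q : SChain X 0 →ₗ[ℤ] SChain X 1 ⧸ M.P :=
    Finsupp.linearCombination ℤ fun σ => M.pot (σ (stdSimplex.vertex 0))
  have : M.P.mkQ = Q ∘ₗ sBdry X 0 := by
    ext1 σ
    refine LinearMap.ext_ring ?_
    simp only [LinearMap.comp_apply, Finsupp.lsingle_apply, M.mk_single, sBdry_zero_single,
      map_sub]
    simp [Q]
  rw [← Submodule.Quotient.mk_eq_zero]
  exact (congr($this z)).trans (by simp [hz])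

/-- The cellular and the singular first homology of a graph agree. -/
theorem nonempty_equiv : Nonempty (LinearMap.ker M.bdry ≃ₗ[ℤ] SingularHomology X 1) := by
  let f : LinearMap.ker M.bdry →ₗ[ℤ] LinearMap.ker (sBdry X 0) :=
    M.edgeChain.restrict fun c hc => by
      rw [LinearMap.mem_ker] at hc ⊢
      rw [sBdry_edgeChain, hc, map_zero]
  let g := (Submodule.mkQ ((LinearMap.range (sBdry X 1)).submoduleOf
    (LinearMap.ker (sBdry X 0)))) ∘ₗ f
  refine ⟨(LinearEquiv.ofBijective g ⟨?_, ?_⟩).trans (singularHomologyEquiv X).symm⟩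
  · rw [injective_iff_map_eq_zero]
    intro c hc
    have : f c ∈ _ := (Submodule.Quotient.mk_eq_zero _).1 hc
    exact Subtype.ext (M.edgeChain_mem_range this)
  · intro z
    obtain ⟨⟨z, hz⟩, rfl⟩ := Submodule.mkQ_surjective _ z
    obtain ⟨b, ⟨y, rfl⟩, l, ⟨c, rfl⟩, h⟩ := Submodule.mem_sup.1 (M.mem_P_of_cycle hz)
    have hc : M.bdry c = 0 := by
      apply M.vtxChain_injective
      have h1 : sBdry X 0 (sBdry X 1 y) = 0 := congr($(sBdry_comp X) y)
      have h2 := congrArg (sBdry X 0) h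
      rw [map_add, h1, zero_add, sBdry_edgeChain] at h2
      rw [h2, map_zero]
      exact hz
    refine ⟨⟨c, hc⟩, (Submodule.Quotient.eq _).2 ?_⟩
    refine ⟨-y, ?_⟩
    change sBdry X 1 (-y) = M.edgeChain c - z
    rw [← h, map_neg]
    abel

end GraphModel

/-! ### The graph structure of the configuration space -/

section Geometry

open Fin (castSucc last)

/-- Affine coordinates around the vertex `σ`: the `j`-th point lies on the edge from
`σ j.castSucc` to the unoccupied vertex `σ (last n)`, at parameter `c j`. For a point of the
configuration space at most one `c j` is nonzero. -/
noncomputable def pt {n : ℕ} (σ : Equiv.Perm (Fin (n + 1))) (c : Fin n → ℝ) :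
    Fin n → Fin (n + 1) → ℝ :=
  fun j => (1 - c j) • Pi.single (σ j.castSucc) 1 + c j • Pi.single (σ (last n)) 1

variable {n : ℕ}

lemma pt_last (σ : Equiv.Perm (Fin (n + 1))) (c : Fin n → ℝ) (j : Fin n) :
    pt σ c j (σ (last n)) = c j := by
  simp [pt, (Fin.castSucc_lt_last j).ne']

lemma pt_castSucc (σ : Equiv.Perm (Fin (n + 1))) (c : Fin n → ℝ) (j k : Fin n) :
    pt σ c j (σ k.castSucc) = if k = j then 1 - c j else 0 := by
  simp [pt, Pi.single_apply, (Fin.castSucc_lt_last k).ne]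

lemma pt_ne_zero {σ : Equiv.Perm (Fin (n + 1))} {c : Fin n → ℝ} {j : Fin n} {m : Fin (n + 1)}
    (h : pt σ c j m ≠ 0) : m = σ j.castSucc ∨ m = σ (last n) ∧ c j ≠ 0 := by
  obtain ⟨m, rfl⟩ := σ.surjective m
  induction m using Fin.lastCases with
  | last => rw [pt_last] at h; exact .inr ⟨rfl, h⟩
  | cast k =>
    rw [pt_castSucc] at h
    by_cases hk : k = j
    · exact .inl (by rw [hk])
    · simp [hk] at h

lemma pt_mem (σ : Equiv.Perm (Fin (n + 1))) (i : Fin n) {t : ℝ} (ht : t ∈ Set.Icc (0 : ℝ) 1) :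
    pt σ (Pi.single i t) ∈ DConf n (n + 1) := by
  have hc (j : Fin n) : (Pi.single i t : Fin n → ℝ) j ∈ Set.Icc (0 : ℝ) 1 := by
    by_cases h : j = i
    · subst h; simpa using ht
    · simp [h]
  refine ⟨fun j => ?_, fun j k hjk => ?_⟩
  · exact (convex_stdSimplex ℝ (Fin (n + 1))) (single_mem_stdSimplex ℝ _)
      (single_mem_stdSimplex ℝ _) (sub_nonneg.2 (hc j).2) (hc j).1 (sub_add_cancel _ _)
  · refine Set.disjoint_left.2 fun m hj hk => ?_
    have hne (j : Fin n) : σ j.castSucc ≠ σ (last n) :=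
      fun h => (Fin.castSucc_lt_last j).ne (σ.injective h)
    rcases pt_ne_zero hj with h1 | ⟨h1, h1'⟩ <;> rcases pt_ne_zero hk with h2 | ⟨h2, h2'⟩
    · exact hjk (Fin.castSucc_injective _ (σ.injective (h1.symm.trans h2)))
    · exact hne _ (h1.symm.trans h2)
    · exact hne _ (h2.symm.trans h1)
    · refine hjk ?_
      rw [Pi.single_apply] at h1' h2'
      rw [(ite_ne_right_iff.1 h1').1, (ite_ne_right_iff.1 h2').1]

lemma continuous_pt (σ : Equiv.Perm (Fin (n + 1))) : Continuous (pt σ) := by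
  unfold pt
  fun_prop

/-- The move of the `i`-th point at `σ`, traversed backwards, is the move of the `i`-th point at the
adjacent vertex. -/
lemma pt_flip (σ : Equiv.Perm (Fin (n + 1))) (i : Fin n) (t : ℝ) :
    pt (σ * Equiv.swap i.castSucc (last n)) (Pi.single i (1 - t)) = pt σ (Pi.single i t) := by
  ext j m
  by_cases h : j = i
  · subst h
    simp [pt, add_comm]
  · have : Equiv.swap i.castSucc (last n) j.castSucc = j.castSucc :=
      Equiv.swap_apply_of_ne_of_ne (fun h' => h (Fin.castSucc_injective _ h'))
        (Fin.castSucc_lt_last j).ne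
    simp [pt, h, this]

lemma continuous_coord (j : Fin n) (m : Fin (n + 1)) :
    Continuous fun x : DConf n (n + 1) => x.1 j m :=
  (continuous_apply_apply j m).comp continuous_subtype_val

/-- The open star of the vertex `σ`. -/
def dstar (σ : Equiv.Perm (Fin (n + 1))) : Set (DConf n (n + 1)) :=
  {x | ∀ i, 0 < x.1 i (σ i.castSucc)}

lemma dstar_open (σ : Equiv.Perm (Fin (n + 1))) : IsOpen (dstar σ) := by
  simp only [dstar, Set.ofPred_forall]
  exact isOpen_iInter_of_finite fun i => isOpen_lt continuous_const (continuous_coord _ _)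

/-- Choosing a vertex in each support gives an injection of the `n` points into the `n + 1` vertices,
which extends to a permutation. -/
lemma dstar_cover (x : DConf n (n + 1)) : ∃ σ, x ∈ dstar σ := by
  have h (i : Fin n) : ∃ m, x.1 i m ≠ 0 := by
    by_contra! h
    have := (x.2.1 i).2
    simp [h] at this
  choose s hs using h
  have hinj : Function.Injective s := by
    intro i j hij
    by_contra hne
    exact Set.disjoint_left.1 (x.2.2 i j hne) (hs i) (by rw [hij]; exact hs j)
  obtain ⟨m, hm⟩ : ∃ m, ∀ i, s i ≠ m := by
    by_contra! h
    have := Fintype.card_le_of_surjective s h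
    simp at this
  have hb : Function.Injective (Fin.snoc s m : Fin (n + 1) → Fin (n + 1)) := by
    intro a b
    induction a using Fin.lastCases with
    | last =>
      induction b using Fin.lastCases with
      | last => simp
      | cast b => simpa using fun h => (hm _ h.symm).elim
    | cast a =>
      induction b using Fin.lastCases with
      | last => simpa using hm a
      | cast b => simpa using fun h => hinj h
  refine ⟨Equiv.ofBijective _ (Finite.injective_iff_bijective.1 hb), fun i => ?_⟩
  simpa using lt_of_le_of_ne ((x.2.1 i).1 _) (hs i).symm

/-- In the open star of `σ` all points but one sit at their vertex, and that one may be on its way to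
the unoccupied vertex: every `σ k.castSucc` is in the support of the `k`-th point, which leaves only
`σ (last n)`, and it belongs to at most one support. For `n = 0` there is no `i` to exhibit. -/
lemma dstar_form {σ : Equiv.Perm (Fin (n + 1))} (hn : 0 < n) {x : DConf n (n + 1)}
    (hx : x ∈ dstar σ) : ∃ i, ∃ a ∈ Set.Icc (0 : ℝ) 1, x.1 = pt σ (Pi.single i a) := by
  have hz {j k : Fin n} (h : k ≠ j) : x.1 j (σ k.castSucc) = 0 := by
    by_contra h'
    exact Set.disjoint_left.1 (x.2.2 k j h) (hx k).ne' h'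
  have hsum (j : Fin n) : x.1 j (σ j.castSucc) + x.1 j (σ (last n)) = 1 := by
    rw [← (x.2.1 j).2, ← Equiv.sum_comp σ, Fin.sum_univ_castSucc,
      Finset.sum_eq_single_of_mem j (Finset.mem_univ _) fun k _ hk => hz hk]
  have hpt : x.1 = pt σ fun j => x.1 j (σ (last n)) := by
    ext j m
    obtain ⟨m, rfl⟩ := σ.surjective m
    induction m using Fin.lastCases with
    | last => rw [pt_last]
    | cast k =>
      rw [pt_castSucc]
      split_ifs with h
      · subst h; linarith [hsum k]
      · exact hz h
  obtain ⟨i, hi⟩ : ∃ i, ∀ j ≠ i, x.1 j (σ (last n)) = 0 := by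
    by_cases h : ∃ i, x.1 i (σ (last n)) ≠ 0
    · obtain ⟨i, hi⟩ := h
      refine ⟨i, fun j hj => ?_⟩
      by_contra h'
      exact Set.disjoint_left.1 (x.2.2 j i hj) h' hi
    · push Not at h
      exact ⟨⟨0, hn⟩, fun j _ => h j⟩
  refine ⟨i, x.1 i (σ (last n)), ⟨(x.2.1 i).1 _, ?_⟩, ?_⟩
  · linarith [hsum i, hx i]
  · conv_lhs => rw [hpt]
    congr 1
    ext j
    by_cases h : j = i
    · subst h; simp
    · simp [h, hi j h]

/-- Truncation of a real number to the unit interval. -/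
noncomputable def clamp : C(ℝ, ℝ) where
  toFun t := Set.projIcc (0 : ℝ) 1 zero_le_one t
  continuous_toFun := continuous_subtype_val.comp continuous_projIcc

lemma clamp_mem (t : ℝ) : clamp t ∈ Set.Icc (0 : ℝ) 1 := (Set.projIcc (0 : ℝ) 1 zero_le_one t).2

lemma clamp_of_mem {t : ℝ} (ht : t ∈ Set.Icc (0 : ℝ) 1) : clamp t = t := by
  change ((Set.projIcc (0 : ℝ) 1 zero_le_one t : Set.Icc (0 : ℝ) 1) : ℝ) = t
  rw [Set.projIcc_of_mem _ ht]

/-- The edge along which the `i`-th point moves from its place at `σ` to the unoccupied vertex. Each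
edge of the graph arises from two darts, one for each orientation (`dart_flip`). -/
noncomputable def dart (σ : Equiv.Perm (Fin (n + 1))) (i : Fin n) : C(ℝ, DConf n (n + 1)) where
  toFun t := ⟨pt σ (Pi.single i (clamp t)), pt_mem σ i (clamp_mem t)⟩
  continuous_toFun := ((continuous_pt σ).comp
    ((continuous_single i).comp clamp.continuous)).subtype_mk _

lemma dart_val (σ : Equiv.Perm (Fin (n + 1))) (i : Fin n) {t : ℝ} (ht : t ∈ Set.Icc (0 : ℝ) 1) :
    (dart σ i t).1 = pt σ (Pi.single i t) := by
  simp [dart, clamp_of_mem ht]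

lemma pt_zero_mem (σ : Equiv.Perm (Fin (n + 1))) : pt σ 0 ∈ DConf n (n + 1) := by
  refine ⟨fun j => ?_, fun j k hjk => ?_⟩
  · simpa [pt] using single_mem_stdSimplex ℝ _
  · refine Set.disjoint_left.2 fun m hj hk => hjk ?_
    have h1 := pt_ne_zero hj
    have h2 := pt_ne_zero hk
    simp only [Pi.zero_apply, ne_eq, not_true_eq_false, and_false, or_false] at h1 h2
    exact Fin.castSucc_injective _ (σ.injective (h1.symm.trans h2))

/-- The vertex of the configuration space given by `σ`. -/
noncomputable def dvtx (σ : Equiv.Perm (Fin (n + 1))) : DConf n (n + 1) :=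
  ⟨pt σ 0, pt_zero_mem σ⟩

lemma dvtx_injective : Function.Injective (dvtx (n := n)) := by
  intro σ τ h
  have h' : pt σ 0 = pt τ 0 := congrArg Subtype.val h
  have key (j : Fin n) : σ j.castSucc = τ j.castSucc := by
    have h1 := pt_castSucc σ 0 j j
    rw [h'] at h1
    have := pt_ne_zero (σ := τ) (c := 0) (j := j) (m := σ j.castSucc) (by rw [h1]; simp)
    simpa using this
  ext m : 1
  induction m using Fin.lastCases with
  | cast j => exact key j
  | last =>
    obtain ⟨m, hm⟩ := τ.surjective (σ (last n))
    induction m using Fin.lastCases with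
    | last => exact hm.symm
    | cast j =>
      rw [← key] at hm
      exact absurd (σ.injective hm) (Fin.castSucc_lt_last j).ne

lemma dart_zero (σ : Equiv.Perm (Fin (n + 1))) (i : Fin n) : dart σ i 0 = dvtx σ :=
  Subtype.ext (by rw [dart_val _ _ (by simp), dvtx, Pi.single_zero])

lemma dart_flip (σ : Equiv.Perm (Fin (n + 1))) (i : Fin n) {t : ℝ} (ht : t ∈ Set.Icc (0 : ℝ) 1) :
    dart (σ * Equiv.swap i.castSucc (last n)) i (1 - t) = dart σ i t :=
  Subtype.ext (by
    rw [dart_val _ _ ht, dart_val _ _ ⟨by linarith [ht.2], by linarith [ht.1]⟩, pt_flip])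

lemma dart_one (σ : Equiv.Perm (Fin (n + 1))) (i : Fin n) :
    dart σ i 1 = dvtx (σ * Equiv.swap i.castSucc (last n)) := by
  rw [← dart_flip _ _ (by simp), sub_self, dart_zero]

/-- The straight-line contraction of the open star of `σ`. -/
noncomputable def dcontr (hn : 0 < n) (σ : Equiv.Perm (Fin (n + 1))) :
    C(dstar σ × ℝ, DConf n (n + 1)) where
  toFun p := ⟨(1 - clamp p.2) • p.1.1.1 + clamp p.2 • pt σ 0, by
    obtain ⟨i, a, ha, h⟩ := dstar_form hn p.1.2
    have hu := clamp_mem p.2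
    have : (1 - clamp p.2) • p.1.1.1 + clamp p.2 • pt σ 0 =
        pt σ (Pi.single i ((1 - clamp p.2) * a)) := by
      rw [h]
      ext j m
      by_cases hj : j = i
      · subst hj; simp [pt]; ring
      · simp [pt, hj]; ring
    rw [this]
    exact pt_mem _ _ ⟨mul_nonneg (sub_nonneg.2 hu.2) ha.1,
      mul_le_one₀ (by linarith [hu.1]) ha.1 ha.2⟩⟩
  continuous_toFun := by
    refine Continuous.subtype_mk ?_ _
    fun_prop

lemma dcontr_val (hn : 0 < n) (σ : Equiv.Perm (Fin (n + 1))) (x : dstar σ) :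
    ∃ i, ∃ a ∈ Set.Icc (0 : ℝ) 1, ∀ u ∈ Set.Icc (0 : ℝ) 1,
      dcontr hn σ (x, u) = dart σ i ((1 - u) * a) := by
  obtain ⟨i, a, ha, h⟩ := dstar_form hn x.2
  refine ⟨i, a, ha, fun u hu => Subtype.ext ?_⟩
  rw [dart_val _ _ ⟨mul_nonneg (sub_nonneg.2 hu.2) ha.1,
      mul_le_one₀ (by linarith [hu.1]) ha.1 ha.2⟩]
  simp only [dcontr, ContinuousMap.coe_mk, clamp_of_mem hu, h]
  ext j m
  by_cases hj : j = i
  · subst hj; simp [pt]; ring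
  · simp [pt, hj]; ring

/-- The edges, each represented by the one of its two darts that starts at the smaller vertex of the
simplex. -/
abbrev DEdge (n : ℕ) : Type :=
  {p : Equiv.Perm (Fin (n + 1)) × Fin n // p.1 p.2.castSucc < p.1 (last n)}

open Classical in
/-- The map to the circle collapsing the complement of the open edge `e`. On the closed edge it is the
parameter of the moving point. -/
noncomputable def dcollapse (hn : 0 < n) (e : DEdge n) :
    C(DConf n (n + 1), AddCircle (1 : ℝ)) where
  toFun x := if x.1 = pt e.1.1 (Pi.single e.1.2 (x.1 e.1.2 (e.1.1 (last n)))) then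
    (x.1 e.1.2 (e.1.1 (last n)) : AddCircle (1 : ℝ)) else 0
  continuous_toFun := by
    obtain ⟨⟨σ, i⟩, he⟩ := e
    have hval : Continuous fun x : DConf n (n + 1) => x.1 i (σ (last n)) :=
      continuous_coord _ _
    -- `A` is the closed edge and `B` the complement of the open edge.
    let A : Set (DConf n (n + 1)) := {x | x.1 = pt σ (Pi.single i (x.1 i (σ (last n))))}
    let B : Set (DConf n (n + 1)) := {x | x.1 i (σ (last n)) = 0} ∪
      ⋃ j, {x | x.1 j (σ (castSucc j)) = 0}
    have hA : IsClosed A := isClosed_eq continuous_subtype_val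
      ((continuous_pt σ).comp ((continuous_single i).comp hval))
    have hB : IsClosed B := (isClosed_eq hval continuous_const).union
      (isClosed_iUnion_of_finite fun j => isClosed_eq (continuous_coord _ _) continuous_const)
    have hAB : A ∪ B = Set.univ := by
      refine Set.eq_univ_of_forall fun x => ?_
      by_contra h
      simp only [Set.mem_union, not_or, B, Set.mem_iUnion, not_exists, Set.mem_ofPred_eq] at h
      obtain ⟨hxA, h0, h1⟩ := h
      have hs : x ∈ dstar σ := fun j => lt_of_le_of_ne ((x.2.1 j).1 _) (Ne.symm (h1 j))
      obtain ⟨i', a, ha, hx⟩ := dstar_form hn hs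
      have h2 : x.1 i (σ (last n)) = (Pi.single i' a : Fin n → ℝ) i := by rw [hx, pt_last]
      have hi : i = i' := by
        by_contra hne
        exact h0 (by rw [h2]; simp [hne])
      subst hi
      refine hxA ?_
      change x.1 = _
      rw [h2, Pi.single_eq_same, hx]
    rw [← continuousOn_univ, ← hAB]
    refine ContinuousOn.union_of_isClosed ?_ ?_ hA hB
    · have hc : Continuous fun x : DConf n (n + 1) =>
          ((x.1 i (σ (last n)) : ℝ) : AddCircle (1 : ℝ)) :=
        (AddCircle.continuous_mk' 1).comp hval
      exact hc.continuousOn.congr fun x hx => if_pos hx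
    · refine ContinuousOn.congr (f := fun _ => (0 : AddCircle (1 : ℝ))) continuousOn_const fun x hx => ?_
      dsimp only
      split_ifs with hxA
      · rcases hx with hx | hx
        · rw [hx.out]; rfl
        · obtain ⟨j, hj⟩ := Set.mem_iUnion.1 hx
          rw [Set.mem_ofPred_eq, hxA, pt_castSucc, if_pos rfl] at hj
          have hji : j = i := by
            by_contra hne
            simp [hne] at hj
          subst hji
          rw [Pi.single_eq_same, sub_eq_zero] at hj
          rw [← hj]
          exact AddCircle.coe_period 1
      · rfl

lemma dcollapse_self (hn : 0 < n) (e : DEdge n) {t : ℝ} (ht : t ∈ Set.Icc (0 : ℝ) 1) :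
    dcollapse hn e (dart e.1.1 e.1.2 t) = (t : AddCircle (1 : ℝ)) := by
  simp [dcollapse, dart_val _ _ ht, pt_last]

/-- Two edges meet only in their ends: at an interior point the moving index, the two vertices of the
simplex it moves between and the places of the other points can be read off, and the orientation is
fixed by the order of those two vertices. -/
lemma dcollapse_ne (hn : 0 < n) {e e' : DEdge n} (hne : e ≠ e') {t : ℝ}
    (ht : t ∈ Set.Icc (0 : ℝ) 1) : dcollapse hn e (dart e'.1.1 e'.1.2 t) = 0 := by
  obtain ⟨⟨σ, i⟩, he⟩ := e
  obtain ⟨⟨σ', i'⟩, he'⟩ := e'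
  dsimp only at he he'
  simp only [dcollapse, ContinuousMap.coe_mk, dart_val _ _ ht]
  split_ifs with h
  swap
  · rfl
  generalize hx : pt σ' (Pi.single i' t) = x at *
  generalize ha : x i (σ (last n)) = a at *
  have ha' : a = 0 ∨ a = 1 := by
    by_contra! hcon
    obtain ⟨h0, h1⟩ := hcon
    refine hne ?_
    have hi : i = i' := by
      by_contra hi
      rw [← hx] at ha
      simp only [pt, Pi.single_eq_of_ne hi, sub_zero, one_smul, zero_smul, add_zero] at ha
      rw [Pi.single_apply] at ha
      split_ifs at ha
      · exact h1 ha.symm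
      · exact h0 ha.symm
    subst hi
    have hv1 : x i (σ i.castSucc) ≠ 0 := by
      rw [h, pt_castSucc, if_pos rfl, Pi.single_eq_same]
      exact sub_ne_zero.2 (Ne.symm h1)
    have hv2 : x i (σ (last n)) ≠ 0 := by rwa [ha]
    rw [← hx] at hv1 hv2
    have hlast : σ i.castSucc = σ' i.castSucc ∧ σ (last n) = σ' (last n) := by
      rcases pt_ne_zero hv1 with h3 | ⟨h3, -⟩ <;> rcases pt_ne_zero hv2 with h4 | ⟨h4, -⟩
      · exact absurd (h3.trans h4.symm) he.ne
      · exact ⟨h3, h4⟩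
      · rw [h3, h4] at he; exact absurd he' he.asymm
      · exact absurd (h3.trans h4.symm) he.ne
    have hσ : σ = σ' := by
      ext m : 1
      induction m using Fin.lastCases with
      | last => exact hlast.2
      | cast j =>
        by_cases hj : j = i
        · rw [hj]; exact hlast.1
        · have hv : x j (σ j.castSucc) ≠ 0 := by
            rw [h, pt_castSucc, if_pos rfl, Pi.single_eq_of_ne hj]
            simp
          rw [← hx] at hv
          rcases pt_ne_zero hv with h3 | ⟨-, h3⟩
          · exact h3
          · exact absurd (Pi.single_eq_of_ne hj _) h3
    subst hσ
    rfl
  rcases ha' with rfl | rfl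
  · rfl
  · exact AddCircle.coe_period 1

/-- The configuration space as a graph. For `n = 0` it would be a point, with no edge through it. -/
noncomputable def dmodel (hn : 0 < n) :
    GraphModel (DConf n (n + 1)) (Equiv.Perm (Fin (n + 1))) (DEdge n) where
  vtx := dvtx
  vtx_inj := dvtx_injective
  src e := e.1.1
  tgt e := e.1.1 * Equiv.swap e.1.2.castSucc (last n)
  edge e := dart e.1.1 e.1.2
  edge_zero _ := dart_zero _ _
  edge_one _ := dart_one _ _
  star := dstar
  star_open := dstar_open
  star_cover := dstar_cover
  contr := dcontr hn
  contr_zero σ x := Subtype.ext (by simp [dcontr, clamp_of_mem])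
  contr_one σ x := Subtype.ext (by simp [dcontr, clamp_of_mem, dvtx])
  contr_edge σ x := by
    obtain ⟨i, a, ha, h⟩ := dcontr_val hn σ x
    by_cases hlt : σ i.castSucc < σ (last n)
    · refine ⟨⟨(σ, i), hlt⟩, a, ha, 0, .inl rfl, fun u hu => ?_⟩
      rw [h u hu, mul_zero, add_zero]
    · have hne : σ (last n) ≠ σ i.castSucc :=
        fun h => (Fin.castSucc_lt_last i).ne' (σ.injective h)
      refine ⟨⟨(σ * Equiv.swap i.castSucc (last n), i), ?_⟩, 1 - a,
        ⟨by linarith [ha.2], by linarith [ha.1]⟩, 1, .inr rfl, fun u hu => ?_⟩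
      · simpa using lt_of_le_of_ne (not_lt.1 hlt) hne
      · rw [h u hu, ← dart_flip _ _ ⟨mul_nonneg (sub_nonneg.2 hu.2) ha.1,
          mul_le_one₀ (by linarith [hu.1]) ha.1 ha.2⟩]
        congr 1
        ring
  collapse := dcollapse hn
  collapse_self e _ ht := dcollapse_self hn e ht
  collapse_ne _ _ h _ ht := dcollapse_ne hn h ht

end Geometry

/-! ### Connectedness and counting -/

section Counting

open Fin (castSucc last)

variable {n : ℕ}

/-- The transpositions involving `last n` generate the symmetric group. -/
lemma perm_connected {r : Equiv.Perm (Fin (n + 1)) → Equiv.Perm (Fin (n + 1)) → Prop}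
    (hr : Equivalence r) (h : ∀ σ i, r σ (σ * Equiv.swap (castSucc i) (last n)))
    (σ : Equiv.Perm (Fin (n + 1))) : r 1 σ := by
  have hlast (σ : Equiv.Perm (Fin (n + 1))) (x : Fin (n + 1)) :
      r σ (σ * Equiv.swap x (last n)) := by
    induction x using Fin.lastCases with
    | last =>
      rw [Equiv.swap_self, ← Equiv.Perm.one_def, mul_one]
      exact hr.refl σ
    | cast i => exact h σ i
  induction σ using Equiv.Perm.swap_induction_on' with
  | one => exact hr.refl 1
  | mul_swap f x y hxy ih =>
    refine hr.trans ih ?_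
    by_cases hx : x = last n
    · rw [hx, Equiv.swap_comm]; exact hlast f y
    by_cases hy : y = last n
    · rw [hy]; exact hlast f x
    have : Equiv.swap x y =
        Equiv.swap x (last n) * Equiv.swap y (last n) * Equiv.swap x (last n) := by
      rw [Equiv.swap_comm x (last n), Equiv.swap_mul_swap_mul_swap hy hxy.symm, Equiv.swap_comm]
    rw [this, ← mul_assoc, ← mul_assoc]
    exact hr.trans (hlast _ _) (hr.trans (hlast _ _) (hlast _ _))

/-- The augmentation of cellular `0`-chains, the sum of the coefficients. -/
noncomputable def aug (V : Type) : (V →₀ ℤ) →ₗ[ℤ] ℤ := Finsupp.linearCombination ℤ fun _ => 1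

lemma aug_single {V : Type} (v : V) (a : ℤ) : aug V (.single v a) = a := by simp [aug]

lemma bdry_single {X V E : Type} [TopologicalSpace X] (M : GraphModel X V E) (e : E) :
    M.bdry (.single e 1) = .single (M.tgt e) 1 - .single (M.src e) 1 := by
  simp [GraphModel.bdry]

/-- As the graph is connected, any two vertices agree modulo the boundaries. -/
lemma range_bdry (hn : 0 < n) :
    LinearMap.range (dmodel hn).bdry = LinearMap.ker (aug (Equiv.Perm (Fin (n + 1)))) := by
  apply le_antisymm
  · rw [LinearMap.range_le_ker_iff]
    ext1 e
    refine LinearMap.ext_ring ?_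
    simp [bdry_single, aug_single]
  · let R := LinearMap.range (dmodel hn).bdry
    let r (σ τ : Equiv.Perm (Fin (n + 1))) : Prop :=
      R.mkQ (.single σ 1) = R.mkQ (.single τ 1)
    have hr : Equivalence r := ⟨fun _ => rfl, fun h => h.symm, fun h h' => h.trans h'⟩
    have hedge (e : DEdge n) : r (e.1.1 * Equiv.swap (castSucc e.1.2) (last n)) e.1.1 :=
      (Submodule.Quotient.eq _).2 ⟨.single e 1, bdry_single _ _⟩
    have hconn := perm_connected hr fun σ i => by
      by_cases hlt : σ i.castSucc < σ (last n)
      · exact (hedge ⟨(σ, i), hlt⟩).symm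
      · have hne : σ (last n) ≠ σ i.castSucc :=
          fun h => (Fin.castSucc_lt_last i).ne' (σ.injective h)
        have := hedge ⟨(σ * Equiv.swap i.castSucc (last n), i), by
          simpa using lt_of_le_of_ne (not_lt.1 hlt) hne⟩
        simpa [mul_assoc] using this
    have key : R.mkQ = (LinearMap.toSpanSingleton ℤ _ (R.mkQ (.single 1 1))) ∘ₗ aug _ := by
      ext1 σ
      refine LinearMap.ext_ring ?_
      simpa [aug_single] using (hconn σ).symm
    intro c hc
    rw [← Submodule.Quotient.mk_eq_zero]
    refine (congr($key c)).trans ?_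
    rw [LinearMap.comp_apply, LinearMap.mem_ker.1 hc, map_zero]

lemma finrank_range_add_ker {M M' : Type} [AddCommGroup M] [AddCommGroup M'] [Module.Finite ℤ M]
    (f : M →ₗ[ℤ] M') : Module.finrank ℤ (LinearMap.range f) +
      Module.finrank ℤ (LinearMap.ker f) = Module.finrank ℤ M := by
  rw [← f.quotKerEquivRange.finrank_eq, Submodule.finrank_quotient_add_finrank]

/-- The Euler characteristic: `#edges - #vertices + 1` is the rank of the cycle group. -/
lemma finrank_ker_bdry (hn : 0 < n) :
    Module.finrank ℤ (LinearMap.ker (dmodel hn).bdry) + (n + 1).factorial =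
      Fintype.card (DEdge n) + 1 := by
  have h1 := finrank_range_add_ker (dmodel hn).bdry
  have h2 := finrank_range_add_ker (aug (Equiv.Perm (Fin (n + 1))))
  have h3 : LinearMap.range (aug (Equiv.Perm (Fin (n + 1)))) = ⊤ :=
    LinearMap.range_eq_top.2 fun a => ⟨.single 1 a, aug_single _ _⟩
  rw [range_bdry, Module.finrank_finsupp_self] at h1
  rw [h3, finrank_top, Module.finrank_self, Module.finrank_finsupp_self, Fintype.card_perm,
    Fintype.card_fin] at h2
  lia

/-- Among the `n * (n + 1)!` darts, exactly one of each dart and its reverse is an edge. -/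
lemma card_dedge : 2 * Fintype.card (DEdge n) = n * (n + 1).factorial := by
  let f : Equiv.Perm (Equiv.Perm (Fin (n + 1)) × Fin n) :=
    Function.Involutive.toPerm (fun p => (p.1 * Equiv.swap p.2.castSucc (last n), p.2))
      fun p => by simp [mul_assoc]
  have h1 := Fintype.card_congr (f.subtypeEquiv
    (p := fun p => p.1 p.2.castSucc < p.1 (last n))
    (q := fun p => ¬ p.1 p.2.castSucc < p.1 (last n)) fun p => by
      have hne : p.1 p.2.castSucc ≠ p.1 (last n) :=
        fun h => (Fin.castSucc_lt_last p.2).ne (p.1.injective h)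
      have hf : f p = (p.1 * Equiv.swap p.2.castSucc (last n), p.2) := rfl
      rw [hf]
      simpa using ⟨le_of_lt, fun h => lt_of_le_of_ne h hne⟩)
  have h2 := Fintype.card_congr (Equiv.sumCompl
    fun p : Equiv.Perm (Fin (n + 1)) × Fin n => p.1 p.2.castSucc < p.1 (last n))
  rw [Fintype.card_sum, ← h1, Fintype.card_prod, Fintype.card_perm, Fintype.card_fin,
    Fintype.card_fin] at h2
  rw [two_mul, h2, mul_comm]

lemma dconf_connected (hn : 0 < n) : ConnectedSpace (DConf n (n + 1)) := by
  have hdart (σ : Equiv.Perm (Fin (n + 1))) (i : Fin n) (a b : ℝ) :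
      Joined (dart σ i a) (dart σ i b) :=
    (PathConnectedSpace.joined a b).map (dart σ i).continuous
  have hconn := perm_connected (r := fun σ τ => Joined (dvtx σ) (dvtx τ))
    ⟨fun _ => Joined.refl _, Joined.symm, Joined.trans⟩ fun σ i => by
      rw [← dart_one, ← dart_zero σ i]
      exact hdart σ i 0 1
  have hx (x : DConf n (n + 1)) : Joined (dvtx 1) x := by
    obtain ⟨σ, hσ⟩ := dstar_cover x
    obtain ⟨i, a, ha, h⟩ := dstar_form hn hσ
    have : dart σ i a = x := Subtype.ext (by rw [dart_val _ _ ha, h])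
    refine (hconn σ).trans ?_
    rw [← dart_zero σ i, ← this]
    exact hdart σ i 0 a
  have : PathConnectedSpace (DConf n (n + 1)) :=
    ⟨⟨dvtx 1⟩, fun x y => (hx x).symm.trans (hx y)⟩
  infer_instance

/-- Disjoint subsets of `Fin (n + 1)` have at most `n + 1` elements altogether. -/
lemma cell_dim (S : Fin n → Finset (Fin (n + 1)))
    (h : ∀ a b : Fin n, a ≠ b → Disjoint (S a) (S b)) : (∑ j, (S j).card) - n ≤ 1 := by
  have := Finset.card_le_univ (Finset.univ.biUnion S)
  rw [Finset.card_biUnion fun a _ b _ => h a b, Fintype.card_fin] at this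
  lia

end Counting

/-- For `n ≥ 2`, the space `D_n(Δ^n)` is a connected `1`-dimensional cell complex (every
cell, i.e. ordered partial partition of `[n+1]` with `n` parts, has dimension at most `1`),
and the rank of its first integral homology group equals `(1/2)(n-2)(n+1)! + 1`. -/
theorem dconf_top_graph_betti (n : ℕ) (hn : 2 ≤ n) :
    ConnectedSpace (DConf n (n + 1)) ∧
    (∀ S : Fin n → Finset (Fin (n + 1)), (∀ j, S j ≠ ∅) →
      (∀ a b : Fin n, a ≠ b → Disjoint (S a) (S b)) → (∑ j, (S j).card) - n ≤ 1) ∧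
    Module.finrank ℤ (SingularHomology (DConf n (n + 1)) 1)
      = (n - 2) * Nat.factorial (n + 1) / 2 + 1 := by
  have hn0 : 0 < n := by lia
  refine ⟨dconf_connected hn0, fun S _ h => cell_dim S h, ?_⟩
  obtain ⟨e⟩ := (dmodel hn0).nonempty_equiv
  rw [← e.finrank_eq]
  have h1 := finrank_ker_bdry hn0
  have h2 := card_dedge (n := n)
  obtain ⟨k, rfl⟩ := Nat.exists_eq_add_of_le hn
  have h3 : (2 + k - 2) * (2 + k + 1).factorial + 2 * (2 + k + 1).factorial =
      2 * Fintype.card (DEdge (2 + k)) := by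
    rw [h2, Nat.add_sub_cancel_left]; ring
  lia
end

section
/- For all integers 1 ≤ k < n, the space D_k(Δ^n) is simply connected (it is path-connected and its fundamental group is trivial). -/
/-!
Transpose a configuration: each of the `N = n + 1` vertices carries a vector in `ℝ^k`, and
disjointness of supports says that each such vector lies in the star `Legs` of `k` half-lines glued
at `0`. Normalizing rows makes `DConf k N` a retract of the space of `N`-tuples of points of the star
in which every open leg is occupied. So it suffices that the space `Occupied S N` of `N`-tuples
occupying each leg in a finite set `S` is simply connected when `|S| + 2 ≤ N`
(`simplyConnected_occupied`).

This goes by induction on `N`, together with path-connectedness for `|S| + 1 ≤ N`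
(`pathConnected_occupied`). If `S = ∅` the space is star-shaped about `0`. Otherwise
`Occupied S (N + 1)` is covered by the open set `U ≅ Occupied S N × Legs`, where the last `N` points
already occupy `S`, and by the pairwise disjoint open sets
`V i ≅ Occupied (S \ {i}) N × (open leg i)` for `i ∈ S`, where the first point lies on leg `i`.
Each `V i` is simply connected by induction; `U` and `U ∩ V i ≅ Occupied S N × (open leg i)` are path
connected. `U` itself need not be simply connected, but since the star is contractible, any two paths
in `U` with common endpoints can be pushed into one `V i`, hence are homotopic in the whole space. A
Seifert–van Kampen argument (`simplyConnected_of_star_cover`) finishes the induction.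
-/

open scoped BigOperators

/-! ### A Seifert–van Kampen criterion -/

open Topology in
/-- A choice `c` of one homotopy class of paths from `x₀` to each point which, locally, is compatible
with composition of paths, is compatible with all paths: along a path `γ`, the set of times at which
compatibility holds is clopen. Such a choice therefore forces simple connectedness. -/
theorem simplyConnected_of_transport {X : Type*} [TopologicalSpace X] {x₀ : X}
    (c : ∀ x, Path.Homotopic.Quotient x₀ x)
    (hc : ∀ x, ∃ W ∈ 𝓝 x, ∀ (a b : X) (γ : Path a b), Set.range γ ⊆ W →
      (c a).trans (Path.Homotopic.Quotient.mk γ) = c b) :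
    SimplyConnectedSpace X := by
  have key : ∀ (a b : X) (γ : Path a b), (c a).trans (Path.Homotopic.Quotient.mk γ) = c b := by
    intro a b γ
    let P : Set unitInterval :=
      {t | (c (γ 0)).trans (Path.Homotopic.Quotient.mk (γ.subpath 0 t)) = c (γ t)}
    have hloc : ∀ t, ∀ᶠ s in 𝓝 t, (t ∈ P ↔ s ∈ P) := by
      intro t
      obtain ⟨W, hW, h⟩ := hc (γ t)
      have h1 : ∀ᶠ s in 𝓝 t, Set.uIcc t s ⊆ γ ⁻¹' W :=
        ((tendsto_const_nhds (x := t)).uIcc (Filter.tendsto_id (x := 𝓝 t))).eventually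
          (Filter.eventually_smallSets_subset.2 (γ.continuous.continuousAt hW))
      filter_upwards [h1] with s hs
      have e1 := h _ _ (γ.subpath t s) (by
        rw [Path.range_subpath]; exact Set.image_subset_iff.2 hs)
      have e2 : (Path.Homotopic.Quotient.mk (γ.subpath 0 t)).trans (Path.Homotopic.Quotient.mk (γ.subpath t s)) =
          Path.Homotopic.Quotient.mk (γ.subpath 0 s) := by
        rw [← Path.Homotopic.Quotient.mk_trans]
        exact Path.Homotopic.Quotient.eq.2 ⟨Path.Homotopy.subpathTransSubpath γ 0 t s⟩
      simp only [P, Set.mem_ofPred_eq]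
      rw [← e1, ← e2, ← Path.Homotopic.Quotient.trans_assoc]
      constructor
      · intro h; rw [h]
      · intro h
        have := congrArg (fun z => z.trans (Path.Homotopic.Quotient.mk (γ.subpath t s)).symm) h
        simpa using this
    have hclopen : IsClopen P := by
      constructor
      · rw [← isOpen_compl_iff, isOpen_iff_mem_nhds]
        intro t ht
        filter_upwards [hloc t] with s hs using fun h => ht (hs.2 h)
      · rw [isOpen_iff_mem_nhds]
        intro t ht
        filter_upwards [hloc t] with s hs using hs.1 ht
    have huniv := hclopen.eq_univ ⟨0, by simp [P]⟩
    have h1 : (1 : unitInterval) ∈ P := huniv ▸ Set.mem_univ _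
    simp only [P, Set.mem_ofPred_eq, Path.subpath_zero_one] at h1
    -- `γ 0` and `γ 1` are only propositionally the endpoints of `γ`.
    have hcast : ∀ a' b' (ha : a' = a) (hb : b' = b),
        (c a').trans (Path.Homotopic.Quotient.mk (γ.cast ha hb)) = c b' →
        (c a).trans (Path.Homotopic.Quotient.mk γ) = c b := by
      rintro _ _ rfl rfl h
      simpa using h
    exact hcast _ _ _ _ h1
  rw [simply_connected_iff_paths_homotopic]
  refine ⟨⟨⟨x₀⟩, fun a b => ⟨((c a).symm.trans (c b)).out⟩⟩, fun a b => ⟨?_⟩⟩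
  intro p q
  induction p using Path.Homotopic.Quotient.ind with | mk p =>
  induction q using Path.Homotopic.Quotient.ind with | mk q =>
  have := congrArg (fun z => (c a).symm.trans z) ((key a b p).trans (key a b q).symm)
  simpa [← Path.Homotopic.Quotient.trans_assoc] using this

/-- A subset `U` of `X` is relatively simply connected if paths in `U` with the same endpoints are
homotopic in `X`; the homotopy may leave `U`, and `U` is not required to be path-connected. -/
def RelSimplyConnected {X : Type*} [TopologicalSpace X] (U : Set X) : Prop :=
  ∀ (a b : X) (p q : Path a b), (∀ t, p t ∈ U) → (∀ t, q t ∈ U) → p.Homotopic q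

theorem trans_mem {X : Type*} [TopologicalSpace X] {U : Set X} {a b c : X} {p : Path a b} {q : Path b c}
    (hp : ∀ t, p t ∈ U) (hq : ∀ t, q t ∈ U) (t) : p.trans q t ∈ U := by
  have h : Set.range (p.trans q) ⊆ U := by
    rw [Path.trans_range]
    exact Set.union_subset (Set.range_subset_iff.2 hp) (Set.range_subset_iff.2 hq)
  exact h ⟨t, rfl⟩

open Topology in
/-- Seifert–van Kampen for an open cover consisting of a central set `U` and pairwise disjoint sets
`V i`, all path-connected with path-connected intersections `U ∩ V i`: if each piece is relatively
simply connected, the space is simply connected. -/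
theorem simplyConnected_of_star_cover {X I : Type*} [TopologicalSpace X] {U : Set X}
    {V : I → Set X} (hU : IsOpen U) (hV : ∀ i, IsOpen (V i))
    (hdisj : ∀ i j x, x ∈ V i → x ∈ V j → i = j)
    (hcover : ∀ x, x ∈ U ∨ ∃ i, x ∈ V i)
    (hUc : IsPathConnected U) (hVc : ∀ i, IsPathConnected (V i))
    (hUV : ∀ i, IsPathConnected (U ∩ V i))
    (hUs : RelSimplyConnected U) (hVs : ∀ i, RelSimplyConnected (V i)) :
    SimplyConnectedSpace X := by
  obtain ⟨x₀, hx₀⟩ := hUc.nonempty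
  choose b hb using fun i => (hUV i).nonempty
  -- Points of `U` are reached within `U`; a point of `V i` is reached by going within `U` to the
  -- chosen point `b i` and then within `V i`. On `U ∩ V i` the two recipes agree.
  have hex : ∀ x, ∃ c : Path.Homotopic.Quotient x₀ x,
      (∀ p : Path x₀ x, (∀ t, p t ∈ U) → c = Path.Homotopic.Quotient.mk p) ∧
      (∀ i, ∀ (d : Path x₀ (b i)) (e : Path (b i) x), (∀ t, d t ∈ U) → (∀ t, e t ∈ V i) →
        c = (Path.Homotopic.Quotient.mk d).trans (Path.Homotopic.Quotient.mk e)) := by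
    intro x
    by_cases hx : x ∈ U
    · obtain ⟨p, hp⟩ := hUc.joinedIn _ hx₀ _ hx
      refine ⟨Path.Homotopic.Quotient.mk p, fun q hq => Path.Homotopic.Quotient.eq.2 (hUs _ _ _ _ hp hq), ?_⟩
      intro i d e hd he
      obtain ⟨w, hw⟩ := (hUV i).joinedIn _ (hb i) x ⟨hx, by simpa using he 1⟩
      rw [Path.Homotopic.Quotient.eq.2 (hVs i _ _ e w he fun t => (hw t).2), ← Path.Homotopic.Quotient.mk_trans]
      exact Path.Homotopic.Quotient.eq.2 (hUs _ _ _ _ hp (trans_mem hd fun t => (hw t).1))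
    · obtain ⟨i, hi⟩ := (hcover x).resolve_left hx
      obtain ⟨d, hd⟩ := hUc.joinedIn _ hx₀ _ (hb i).1
      obtain ⟨e, he⟩ := (hVc i).joinedIn _ (hb i).2 _ hi
      refine ⟨(Path.Homotopic.Quotient.mk d).trans (Path.Homotopic.Quotient.mk e),
        fun p hp => absurd (by simpa using hp 1) hx, ?_⟩
      intro j d' e' hd' he'
      obtain rfl := hdisj i j x hi (by simpa using he' 1)
      rw [Path.Homotopic.Quotient.eq.2 (hUs _ _ d d' hd hd'), Path.Homotopic.Quotient.eq.2 (hVs i _ _ e e' he he')]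
  choose c hcU hcV using hex
  refine simplyConnected_of_transport c fun x => ?_
  rcases hcover x with hx | ⟨i, hi⟩
  · refine ⟨U, hU.mem_nhds hx, fun p q γ hγ => ?_⟩
    rw [Set.range_subset_iff] at hγ
    obtain ⟨w, hw⟩ := hUc.joinedIn _ hx₀ p (by simpa using hγ 0)
    rw [hcU p w hw, hcU q (w.trans γ) (trans_mem hw hγ), Path.Homotopic.Quotient.mk_trans]
  · refine ⟨V i, (hV i).mem_nhds hi, fun p q γ hγ => ?_⟩
    rw [Set.range_subset_iff] at hγ
    obtain ⟨d, hd⟩ := hUc.joinedIn _ hx₀ _ (hb i).1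
    obtain ⟨e, he⟩ := (hVc i).joinedIn _ (hb i).2 p (by simpa using hγ 0)
    rw [hcV p i d e hd he, hcV q i d (e.trans γ) hd (trans_mem he hγ), Path.Homotopic.Quotient.mk_trans,
      Path.Homotopic.Quotient.trans_assoc]

open Path.Homotopic in
/-- Suppose `U` is contained in the image of `f : Z × L → X`, through a continuous partial section
`g`, with `L` simply connected. If paths in the slice `Z × {e}` with common endpoints become homotopic
in `X`, then `U` is relatively simply connected: every path in `Z × L` is homotopic to one that moves
the `L`-coordinate to `e`, runs inside the slice, and moves the `L`-coordinate to its final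
position. -/
theorem relSimplyConnected_of_prod {X Z L : Type*} [TopologicalSpace X] [TopologicalSpace Z]
    [TopologicalSpace L] [SimplyConnectedSpace L] (f : C(Z × L, X)) (e : L)
    (he : ∀ (a b : Z) (p q : Path a b),
      ((p.prod (Path.refl e)).map f.continuous).Homotopic ((q.prod (Path.refl e)).map f.continuous))
    {U : Set X} (g : C(U, Z × L)) (hg : ∀ u, f (g u) = u) :
    RelSimplyConnected U := by
  have hmain : ∀ (a b : Z × L) (p q : Path a b),
      (p.map f.continuous).Homotopic (q.map f.continuous) := by
    rintro ⟨a₁, a₂⟩ ⟨b₁, b₂⟩ p q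
    obtain ⟨α⟩ : Joined a₂ e := PathConnectedSpace.joined _ _
    obtain ⟨β⟩ : Joined e b₂ := PathConnectedSpace.joined _ _
    have detour : ∀ p : Path (a₁, a₂) (b₁, b₂), Path.Homotopic.Quotient.mk p =
        ((Path.Homotopic.Quotient.mk ((Path.refl a₁).prod α)).trans
          (Path.Homotopic.Quotient.mk ((p.map continuous_fst).prod (Path.refl e)))).trans
          (Path.Homotopic.Quotient.mk ((Path.refl b₁).prod β)) := by
      intro p
      simp only [← prod_lift]
      rw [comp_prod_eq_prod_comp, comp_prod_eq_prod_comp]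
      rw [← prod_projLeft_projRight (Path.Homotopic.Quotient.mk p)]
      congr 1
      · simp; rfl
      · exact Subsingleton.elim _ _
    rw [← Path.Homotopic.Quotient.eq, Path.Homotopic.Quotient.mk_map, Path.Homotopic.Quotient.mk_map, detour p, detour q]
    simp only [← Path.Homotopic.Quotient.mk_trans, ← Path.Homotopic.Quotient.mk_map, Path.map_trans]
    simp only [Path.Homotopic.Quotient.mk_trans]
    rw [Path.Homotopic.Quotient.eq.2 (he _ _ (p.map continuous_fst) (q.map continuous_fst))]
  intro a b p q hp hq
  have ha : a ∈ U := by simpa using hp 0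
  have hb : b ∈ U := by simpa using hp 1
  let lift : ∀ p : Path a b, (∀ t, p t ∈ U) → Path (⟨a, ha⟩ : U) ⟨b, hb⟩ := fun p hp =>
    { toFun := fun t => ⟨p t, hp t⟩
      continuous_toFun := by fun_prop
      source' := by simp
      target' := by simp }
  have h := hmain _ _ ((lift p hp).map g.continuous) ((lift q hq).map g.continuous)
  have h2 := h.pathCast (hg ⟨a, ha⟩).symm (hg ⟨b, hb⟩).symm
  convert h2 using 1
  · ext t; simp [hg, lift]
  · ext t; simp [hg, lift]

/-! ### Tuples of points on a star -/

/-- The star with one leg `[0, ∞)` for each `i : ι`, all glued at `0`: nonnegative vectors with at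
most one nonzero coordinate. -/
def Legs (ι : Type*) : Set (ι → ℝ) :=
  {v | (∀ i, 0 ≤ v i) ∧ ∀ i j, i ≠ j → v i = 0 ∨ v j = 0}

/-- The leg of the star indexed by `i`, without the centre. -/
def OpenLeg {ι : Type*} (i : ι) : Set (ι → ℝ) := {v | v ∈ Legs ι ∧ 0 < v i}

/-- `N`-tuples of points of the star such that every open leg indexed by `S` contains a point. -/
def Occupied {ι : Type*} (S : Finset ι) (N : ℕ) : Set (Fin N → ι → ℝ) :=
  {y | (∀ j, y j ∈ Legs ι) ∧ ∀ i ∈ S, ∃ j, 0 < y j i}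

section Occupied

variable {ι : Type*}

theorem smul_mem_legs {v : ι → ℝ} (hv : v ∈ Legs ι) {r : ℝ} (hr : 0 ≤ r) : r • v ∈ Legs ι := by
  refine ⟨fun i => mul_nonneg hr (hv.1 i), fun i j hij => ?_⟩
  rcases hv.2 i j hij with h | h <;> simp [h]

theorem openLeg_subset (i : ι) : OpenLeg i ⊆ Legs ι := fun _ hv => hv.1

theorem eq_of_pos_of_pos {v : ι → ℝ} (hv : v ∈ Legs ι) {i j : ι} (hi : 0 < v i) (hj : 0 < v j) :
    i = j := by
  by_contra hij
  rcases hv.2 i j hij with h | h <;> linarith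

theorem single_mem_openLeg [DecidableEq ι] (i : ι) : Pi.single i (1 : ℝ) ∈ OpenLeg i := by
  refine ⟨⟨fun j => ?_, fun j l hjl => ?_⟩, by simp⟩
  · by_cases h : j = i
    · subst h; simp
    · simp [h]
  · by_cases h : j = i
    · right; simp [show l ≠ i from fun h' => hjl (h.trans h'.symm)]
    · left; simp [h]

instance contractible_legs : ContractibleSpace (Legs ι) := by
  have h0 : (0 : ι → ℝ) ∈ Legs ι := ⟨fun _ => le_rfl, fun _ _ _ => Or.inl rfl⟩
  refine StarConvex.contractibleSpace (x := 0) ?_ ⟨0, h0⟩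
  rw [starConvex_zero_iff]
  exact fun v hv r hr _ => smul_mem_legs hv hr

instance contractible_openLeg [DecidableEq ι] (i : ι) : ContractibleSpace (OpenLeg i) := by
  refine Convex.contractibleSpace ?_ ⟨_, single_mem_openLeg i⟩
  have hz : ∀ v ∈ OpenLeg i, ∀ j, j ≠ i → v j = 0 := fun v hv j hj =>
    (hv.1.2 j i hj).resolve_right hv.2.ne'
  intro v hv w hw a b ha hb hab
  refine ⟨⟨fun j => add_nonneg (mul_nonneg ha (hv.1.1 j)) (mul_nonneg hb (hw.1.1 j)),
    fun j l hjl => ?_⟩, ?_⟩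
  · by_cases h : j = i
    · have hl : l ≠ i := fun h' => hjl (h.trans h'.symm)
      right; simp [hz v hv l hl, hz w hw l hl]
    · left; simp [hz v hv j h, hz w hw j h]
  · rcases ha.eq_or_lt with rfl | ha
    · obtain rfl : b = 1 := by linarith
      simpa using hw.2
    · exact add_pos_of_pos_of_nonneg (mul_pos ha hv.2) (mul_nonneg hb hw.2.le)

instance contractible_occupied_empty (N : ℕ) :
    ContractibleSpace (Occupied (∅ : Finset ι) N) := by
  have h0 : (0 : Fin N → ι → ℝ) ∈ Occupied (∅ : Finset ι) N :=
    ⟨fun _ => ⟨fun _ => le_rfl, fun _ _ _ => Or.inl rfl⟩, by simp⟩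
  refine StarConvex.contractibleSpace (x := 0) ?_ ⟨0, h0⟩
  rw [starConvex_zero_iff]
  exact fun y hy r hr _ => ⟨fun j => smul_mem_legs (hy.1 j) hr, by simp⟩

variable {S S' : Finset ι} {N : ℕ} {L : Set (ι → ℝ)}

theorem continuous_occupied_apply (j : Fin N) : Continuous fun y : Occupied S N => y.1 j :=
  (continuous_apply j).comp continuous_subtype_val

theorem continuous_occupied_apply_apply (j : Fin N) (i : ι) :
    Continuous fun y : Occupied S N => y.1 j i :=
  (continuous_apply i).comp (continuous_occupied_apply j)

/-- Adding a first point from `L` to a tuple occupying `S'` gives a tuple occupying `S`, provided each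
leg of `S` outside `S'` is occupied by every point of `L`. -/
def consMap (hL : L ⊆ Legs ι) (h : ∀ i ∈ S, i ∈ S' ∨ ∀ v ∈ L, 0 < v i) :
    C(Occupied S' N × L, Occupied S (N + 1)) where
  toFun z := ⟨Fin.cons z.2.1 z.1.1, by
    refine ⟨Fin.cases (hL z.2.2) z.1.2.1, fun i hi => ?_⟩
    rcases h i hi with h | h
    · obtain ⟨j, hj⟩ := z.1.2.2 i h
      exact ⟨j.succ, by simpa using hj⟩
    · exact ⟨0, by simpa using h _ z.2.2⟩⟩
  continuous_toFun := by
    refine Continuous.subtype_mk (continuous_pi fun j => ?_) _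
    refine Fin.cases ?_ (fun j => ?_) j
    · exact continuous_subtype_val.comp continuous_snd
    · exact (continuous_occupied_apply j).comp continuous_fst

/-- Separating the first point from the others, on a set of tuples whose first point lies in `L` and
whose other points occupy `S'`. -/
def splitMap {U : Set (Occupied S (N + 1))}
    (h : ∀ u ∈ U, Fin.tail u.1 ∈ Occupied S' N ∧ u.1 0 ∈ L) : C(U, Occupied S' N × L) where
  toFun u := (⟨Fin.tail u.1.1, (h u.1 u.2).1⟩, ⟨u.1.1 0, (h u.1 u.2).2⟩)
  continuous_toFun := by
    refine Continuous.prodMk (Continuous.subtype_mk (continuous_pi fun j => ?_) _)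
      (Continuous.subtype_mk ?_ _)
    · exact (continuous_occupied_apply j.succ).comp continuous_subtype_val
    · exact (continuous_occupied_apply 0).comp continuous_subtype_val

theorem consMap_splitMap (hL : L ⊆ Legs ι) (h : ∀ i ∈ S, i ∈ S' ∨ ∀ v ∈ L, 0 < v i)
    {U : Set (Occupied S (N + 1))}
    (hU : ∀ u ∈ U, Fin.tail u.1 ∈ Occupied S' N ∧ u.1 0 ∈ L) (u : U) :
    consMap hL h (splitMap hU u) = u := by
  apply Subtype.ext
  exact Fin.cons_self_tail _

theorem isPathConnected_of_split [PathConnectedSpace (Occupied S' N)] [PathConnectedSpace L]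
    (hL : L ⊆ Legs ι) (h : ∀ i ∈ S, i ∈ S' ∨ ∀ v ∈ L, 0 < v i)
    {U : Set (Occupied S (N + 1))}
    (hU : ∀ u, u ∈ U ↔ Fin.tail u.1 ∈ Occupied S' N ∧ u.1 0 ∈ L) : IsPathConnected U := by
  have : U = Set.range (consMap hL h (N := N)) := by
    ext u
    constructor
    · intro hu
      exact ⟨_, consMap_splitMap hL h (fun u => (hU u).1) ⟨u, hu⟩⟩
    · rintro ⟨z, rfl⟩
      rw [hU]
      exact ⟨z.1.2, z.2.2⟩
  rw [this]
  exact isPathConnected_range (consMap hL h).continuous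

/-- The tuples whose points other than the first already occupy `S`. -/
def tailOccupied (S : Finset ι) (N : ℕ) : Set (Occupied S (N + 1)) :=
  {y | Fin.tail y.1 ∈ Occupied S N}

/-- The tuples whose first point lies on the open leg `i`. -/
def headOnLeg (S : Finset ι) (N : ℕ) (i : ι) : Set (Occupied S (N + 1)) := {y | 0 < y.1 0 i}

theorem tail_mem_legs (y : Occupied S (N + 1)) (j : Fin N) : Fin.tail y.1 j ∈ Legs ι := y.2.1 j.succ

theorem isOpen_tailOccupied : IsOpen (tailOccupied S N) := by
  have : tailOccupied S N = ⋂ i ∈ S, ⋃ j : Fin N, {y | 0 < y.1 j.succ i} := by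
    ext y
    simp only [Set.mem_iInter, Set.mem_iUnion]
    exact ⟨fun h => h.2, fun h => ⟨tail_mem_legs y, h⟩⟩
  rw [this]
  exact isOpen_biInter_finset fun i _ => isOpen_iUnion fun j =>
    isOpen_lt continuous_const (continuous_occupied_apply_apply j.succ i)

theorem isOpen_headOnLeg (i : ι) : IsOpen (headOnLeg S N i) :=
  isOpen_lt continuous_const (continuous_occupied_apply_apply 0 i)

theorem mem_tailOccupied_or (y : Occupied S (N + 1)) :
    y ∈ tailOccupied S N ∨ ∃ i : S, y ∈ headOnLeg S N i := by
  by_contra! h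
  refine h.1 ⟨tail_mem_legs y, fun i hi => ?_⟩
  obtain ⟨j, hj⟩ := y.2.2 i hi
  induction j using Fin.cases with
  | zero => exact absurd hj (h.2 ⟨i, hi⟩)
  | succ j => exact ⟨j, hj⟩

variable [DecidableEq ι]

theorem mem_headOnLeg_iff {i : ι} (y : Occupied S (N + 1)) :
    y ∈ headOnLeg S N i ↔ Fin.tail y.1 ∈ Occupied (S.erase i) N ∧ y.1 0 ∈ OpenLeg i := by
  refine ⟨fun hy => ⟨⟨tail_mem_legs y, fun l hl => ?_⟩, y.2.1 0, hy⟩, fun hy => hy.2.2⟩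
  obtain ⟨hli, hl⟩ := Finset.mem_erase.1 hl
  obtain ⟨j, hj⟩ := y.2.2 l hl
  induction j using Fin.cases with
  | zero => exact absurd (eq_of_pos_of_pos (y.2.1 0) hj hy) hli
  | succ j => exact ⟨j, hj⟩

theorem mem_erase_or_pos (i : ι) : ∀ l ∈ S, l ∈ S.erase i ∨ ∀ v ∈ OpenLeg i, 0 < v l := by
  intro l hl
  by_cases h : l = i
  · subst h; exact Or.inr fun v hv => hv.2
  · exact Or.inl (Finset.mem_erase.2 ⟨h, hl⟩)

theorem isPathConnected_headOnLeg (i : ι) [PathConnectedSpace (Occupied (S.erase i) N)] :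
    IsPathConnected (headOnLeg S N i) :=
  isPathConnected_of_split (openLeg_subset i) (mem_erase_or_pos i) mem_headOnLeg_iff

theorem occupied_nonempty (S : Finset ι) (N : ℕ) (h : S.card ≤ N) : (Occupied S N).Nonempty := by
  induction N generalizing S with
  | zero =>
    obtain rfl : S = ∅ := by simpa using h
    exact ⟨0, fun j => j.elim0, by simp⟩
  | succ N ih =>
    rcases S.eq_empty_or_nonempty with rfl | ⟨i, hi⟩
    · exact Set.nonempty_coe_sort.1 inferInstance
    · obtain ⟨y, hy⟩ := ih (S.erase i) (by rw [Finset.card_erase_of_mem hi]; omega)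
      exact ⟨_, (consMap (openLeg_subset i) (mem_erase_or_pos i)
        (⟨y, hy⟩, ⟨_, single_mem_openLeg i⟩)).2⟩

/-- Each `headOnLeg S N i` is path-connected by induction, and any two of them are joined through
`tailOccupied S N`, which need not be path-connected here. -/
theorem pathConnected_occupied (S : Finset ι) (N : ℕ) (h : S.card + 1 ≤ N) :
    PathConnectedSpace (Occupied S N) := by
  induction N generalizing S with
  | zero => omega
  | succ N ih =>
    rcases S.eq_empty_or_nonempty with rfl | ⟨i₀, hi₀⟩
    · infer_instance
    have hV : ∀ i ∈ S, IsPathConnected (headOnLeg S N i) := fun i hi => by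
      have := ih (S.erase i) (by rw [Finset.card_erase_of_mem hi]; have := S.card_pos.2 ⟨i, hi⟩; omega)
      exact isPathConnected_headOnLeg i
    -- The first point may slide along the star as soon as the other points occupy `S`.
    have hU : ∀ z : Occupied S N, ∀ v w : Legs ι,
        Joined (consMap (S := S) subset_rfl (fun _ => Or.inl) (z, v))
          (consMap (S := S) subset_rfl (fun _ => Or.inl) (z, w)) := fun z v w => by
      obtain ⟨α⟩ := PathConnectedSpace.joined v w
      exact ⟨((Path.refl z).prod α).map (ContinuousMap.continuous _)⟩
    have key : ∀ z : Occupied S N, ∀ v : Legs ι, ∀ i, ∃ y ∈ headOnLeg S N i,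
        Joined (consMap (S := S) subset_rfl (fun _ => Or.inl) (z, v)) y := fun z v i =>
      ⟨_, (single_mem_openLeg i).2, hU z v ⟨_, (single_mem_openLeg i).1⟩⟩
    have hUy : ∀ y ∈ tailOccupied S N, ∀ i, ∃ y' ∈ headOnLeg S N i, Joined y y' := by
      intro y hy i
      obtain ⟨y', hy', h⟩ := key ⟨_, hy⟩ ⟨y.1 0, y.2.1 0⟩ i
      refine ⟨y', hy', ?_⟩
      convert h
      exact Subtype.ext (Fin.cons_self_tail _).symm
    obtain ⟨z₀, hz₀⟩ := occupied_nonempty S N (by omega)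
    -- A point of any `headOnLeg S N i` is joined, inside it, to a tuple whose tail is `z₀`; the first
    -- point of that tuple can then slide from leg `i` to leg `i₀`.
    have hleg : ∀ y, ∃ y' ∈ headOnLeg S N i₀, Joined y y' := by
      intro y
      rcases mem_tailOccupied_or y with hy | ⟨⟨i, hi⟩, hy⟩
      · exact hUy y hy i₀
      · obtain ⟨y₁, hy₁, h₁⟩ := key ⟨z₀, hz₀⟩ ⟨_, (single_mem_openLeg i).1⟩ i
        obtain ⟨y₂, hy₂, h₂⟩ := key ⟨z₀, hz₀⟩ ⟨_, (single_mem_openLeg i).1⟩ i₀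
        exact ⟨y₂, hy₂, (((hV i hi).joinedIn _ hy _ hy₁).joined.trans h₁.symm).trans h₂⟩
    refine ⟨(hV i₀ hi₀).nonempty.to_type, fun x y => ?_⟩
    obtain ⟨x', hx', hx⟩ := hleg x
    obtain ⟨y', hy', hy⟩ := hleg y
    exact (hx.trans ((hV i₀ hi₀).joinedIn _ hx' _ hy').joined).trans hy.symm

/-- The cover by `tailOccupied S N` and the `headOnLeg S N i`, `i ∈ S`, satisfies the van Kampen
criterion; paths in `tailOccupied S N` are homotopic because they can be pushed into one
`headOnLeg S N i₀`. -/
theorem simplyConnected_occupied (S : Finset ι) (N : ℕ) (h : S.card + 2 ≤ N) :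
    SimplyConnectedSpace (Occupied S N) := by
  induction N generalizing S with
  | zero => omega
  | succ N ih =>
    rcases S.eq_empty_or_nonempty with rfl | ⟨i₀, hi₀⟩
    · infer_instance
    have hpos := S.card_pos.2 ⟨i₀, hi₀⟩
    have hsc : ∀ i ∈ S, SimplyConnectedSpace (Occupied (S.erase i) N) := fun i hi =>
      ih _ (by rw [Finset.card_erase_of_mem hi]; omega)
    have hpc := pathConnected_occupied S N (by omega)
    have hVs : ∀ i ∈ S, RelSimplyConnected (headOnLeg S N i) := by
      intro i hi
      have := hsc i hi
      refine relSimplyConnected_of_prod (consMap (openLeg_subset i) (mem_erase_or_pos i))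
        ⟨_, single_mem_openLeg i⟩ (fun a b p q => ?_)
        (splitMap fun u => (mem_headOnLeg_iff u).1) (consMap_splitMap _ _ _)
      obtain ⟨H⟩ := SimplyConnectedSpace.paths_homotopic p q
      exact Path.Homotopic.map
        ⟨Path.Homotopic.prodHomotopy H (Path.Homotopy.refl _)⟩ (consMap _ _)
    have hUmem : ∀ u : Occupied S (N + 1),
        u ∈ tailOccupied S N ↔ Fin.tail u.1 ∈ Occupied S N ∧ u.1 0 ∈ Legs ι :=
      fun u => ⟨fun hu => ⟨hu, u.2.1 0⟩, fun hu => hu.1⟩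
    refine simplyConnected_of_star_cover (I := S) (U := tailOccupied S N)
      (V := fun i => headOnLeg S N i) isOpen_tailOccupied (fun i => isOpen_headOnLeg _)
      (fun i j y hi hj => Subtype.ext (eq_of_pos_of_pos (y.2.1 0) hi hj)) mem_tailOccupied_or
      (isPathConnected_of_split subset_rfl (fun _ => Or.inl) hUmem) (fun i => ?_) (fun i => ?_)
      ?_ (fun i => hVs i i.2)
    · have := hsc i i.2
      exact isPathConnected_headOnLeg i.1
    · exact isPathConnected_of_split (openLeg_subset i.1) (fun _ => Or.inl)
        fun u => ⟨fun hu => ⟨hu.1, u.2.1 0, hu.2⟩, fun hu => ⟨hu.1, hu.2.2⟩⟩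
    · refine relSimplyConnected_of_prod (consMap subset_rfl fun _ => Or.inl)
        ⟨_, (single_mem_openLeg i₀).1⟩ (fun a b p q => ?_)
        (splitMap fun u => (hUmem u).1) (consMap_splitMap _ _ _)
      -- With the first point fixed on leg `i₀`, both paths stay in `headOnLeg S N i₀`.
      exact hVs i₀ hi₀ _ _ _ _ (fun t => (single_mem_openLeg i₀).2)
        (fun t => (single_mem_openLeg i₀).2)

end Occupied

/-! ### The configuration space as a retract -/

theorem simplyConnected_of_retract {X Y : Type*} [TopologicalSpace X] [TopologicalSpace Y]
    [SimplyConnectedSpace X] (s : C(Y, X)) (r : C(X, Y)) (h : ∀ y, r (s y) = y) :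
    SimplyConnectedSpace Y := by
  rw [simply_connected_iff_paths_homotopic']
  refine ⟨(show Function.Surjective r from fun y => ⟨s y, h y⟩).pathConnectedSpace r.continuous,
    fun {x y} p q => ?_⟩
  have h1 := ((SimplyConnectedSpace.paths_homotopic (p.map s.continuous)
    (q.map s.continuous)).map r).pathCast (h x).symm (h y).symm
  convert h1 using 1
  · ext t; simp [h]
  · ext t; simp [h]

/-- For all integers `1 ≤ k < n`, the discretized configuration space `D_k(Δ^n)` is simply
connected. -/
theorem dconf_simplyConnected (k n : ℕ) (hk : 1 ≤ k) (hkn : k < n) :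
    SimplyConnectedSpace (DConf k (n + 1)) := by
  have := simplyConnected_occupied (Finset.univ : Finset (Fin k)) (n + 1) (by simp; omega)
  have hpos : ∀ (y : Occupied (Finset.univ : Finset (Fin k)) (n + 1)) (i : Fin k),
      0 < ∑ j, y.1 j i := fun y i => by
    obtain ⟨j, hj⟩ := y.2.2 i (Finset.mem_univ i)
    exact Finset.sum_pos' (fun j _ => (y.2.1 j).1 i) ⟨j, Finset.mem_univ j, hj⟩
  -- transposition
  let s : C(DConf k (n + 1), Occupied (Finset.univ : Finset (Fin k)) (n + 1)) :=
    { toFun := fun x => ⟨fun j i => x.1 i j, by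
        refine ⟨fun j => ⟨fun i => (x.2.1 i).1 j, fun i l hil => ?_⟩, fun i _ => ?_⟩
        · by_contra! hne
          exact Set.disjoint_left.1 (x.2.2 i l hil) hne.1 hne.2
        · by_contra! hle
          have h1 : ∑ j, x.1 i j = 1 := (x.2.1 i).2
          have h2 : ∑ j, x.1 i j ≤ 0 := Finset.sum_nonpos fun j _ => hle j
          linarith⟩
      continuous_toFun := by
        refine Continuous.subtype_mk (continuous_pi fun j => continuous_pi fun i => ?_) _
        exact (continuous_apply_apply i j).comp continuous_subtype_val }
  -- transposition followed by division of each row by its sum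
  let r : C(Occupied (Finset.univ : Finset (Fin k)) (n + 1), DConf k (n + 1)) :=
    { toFun := fun y => ⟨fun i j => y.1 j i / ∑ l, y.1 l i, by
        refine ⟨fun i => ⟨fun j => div_nonneg ((y.2.1 j).1 i) (hpos y i).le, ?_⟩,
          fun i l hil => Set.disjoint_left.2 fun j hi hl => ?_⟩
        · rw [← Finset.sum_div, div_self (hpos y i).ne']
        · rcases (y.2.1 j).2 i l hil with h | h
          · exact hi (by simp [h])
          · exact hl (by simp [h])⟩
      continuous_toFun := by
        refine Continuous.subtype_mk (continuous_pi fun i => continuous_pi fun j => ?_) _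
        exact Continuous.div (continuous_occupied_apply_apply j i)
          (continuous_finsetSum _ fun l _ => continuous_occupied_apply_apply l i) fun y => (hpos y i).ne' }
  refine simplyConnected_of_retract s r fun x => Subtype.ext ?_
  funext i j
  have h1 : ∑ j, x.1 i j = 1 := (x.2.1 i).2
  change x.1 i j / ∑ l, x.1 i l = x.1 i j
  rw [h1, div_one]
end

section
/- For integers n ≥ 1 and 1 ≤ k ≤ n+1, the Euler characteristic of D_k(Δ^n) equals χ_{k,n} = k! · Σ_{i=0}^{n−k+1} (−1)^i C(n+1, k+i) S(k+i, k), where S(N,K) is the Stirling number of the second kind. -/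
/-!
An ordered partial partition of `[N]` into `k` parts using `m` elements is the same as a choice of
its support, an `m`-element subset of `[N]` (`partialEquiv`), together with an ordered partition of
`[m]` into `k` nonempty parts, the support being identified with `[m]` by its increasing
enumeration. An ordered partition of `[m]` is in turn a set partition with `k` blocks together with
one of the `k!` orderings of its blocks (`labelEquiv`). So the number of `i`-cells is
`k! * C(N, k + i) * S(k + i, k)` for every `i`, and the alternating sum is the claimed one, since
the binomial coefficient vanishes as soon as `k + i > N`.
-/

open scoped BigOperators

/-- The Stirling number of the second kind `S(N, K)`: the number of partitions of an
`N`-element set into exactly `K` nonempty subsets. -/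
noncomputable def stirling (N K : ℕ) : ℕ :=
  Nat.card {P : Finpartition (Finset.univ : Finset (Fin N)) // P.parts.card = K}

/-- The number of `i`-dimensional cells of the discretized configuration space of `k`
points on the simplex with `N` vertices: the number of ordered partial partitions of
`[N]` with exactly `k` parts using exactly `k + i` elements in total. -/
noncomputable def cellCount (k N i : ℕ) : ℕ :=
  Nat.card {S : Fin k → Finset (Fin N) //
    (∀ j, S j ≠ ∅) ∧ (∀ a b : Fin k, a ≠ b → Disjoint (S a) (S b)) ∧
      ∑ j, (S j).card = k + i}

/-- The Euler characteristic of the discretized configuration space of `k` points on the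
simplex with `N` vertices (i.e. of `D_k(Δ^(N-1))`): the alternating sum of the numbers of
`i`-dimensional cells. -/
noncomputable def eulerCharV (k N : ℕ) : ℤ :=
  ∑ i ∈ Finset.range (N + 1), (-1 : ℤ) ^ i * cellCount k N i

/-- Ordered partitions of `[m]` into `k` nonempty parts: families of pairwise disjoint nonempty sets
that cover `[m]`. -/
def OrdPartition (k m : ℕ) : Type :=
  {S : Fin k → Finset (Fin m) //
    (∀ j, S j ≠ ∅) ∧ (∀ a b : Fin k, a ≠ b → Disjoint (S a) (S b)) ∧ ∀ x, ∃ j, x ∈ S j}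

/-- The set partition underlying an ordered partition. -/
def OrdPartition.toFinpartition {k m : ℕ} (S : OrdPartition k m) :
    Finpartition (Finset.univ : Finset (Fin m)) where
  parts := Finset.univ.image S.1
  supIndep := by
    rw [Finset.supIndep_iff_pairwiseDisjoint]
    intro x hx y hy hxy
    simp only [Finset.coe_image, Finset.coe_univ, Set.image_univ, Set.mem_range] at hx hy
    obtain ⟨a, rfl⟩ := hx
    obtain ⟨b, rfl⟩ := hy
    exact S.2.2.1 a b fun h => hxy (by rw [h])
  sup_parts := by
    ext x
    obtain ⟨j, hj⟩ := S.2.2.2 x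
    simp only [Finset.mem_sup, Finset.mem_image, Finset.mem_univ, true_and, iff_true]
    exact ⟨S.1 j, ⟨j, rfl⟩, hj⟩
  bot_notMem := by
    simp only [Finset.mem_image, Finset.mem_univ, true_and, not_exists]
    exact S.2.1

lemma OrdPartition.injective {k m : ℕ} (S : OrdPartition k m) : Function.Injective S.1 := by
  intro a b hab
  by_contra h
  have h1 := S.2.2.1 a b h
  rw [hab, disjoint_self] at h1
  exact S.2.1 b h1

/-- Ordering the blocks of a set partition with `k` blocks, i.e. choosing a bijection from `Fin k`
to the set of blocks, yields an ordered partition. -/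
def ofLabelling (k m : ℕ)
    (x : Σ P : {P : Finpartition (Finset.univ : Finset (Fin m)) // P.parts.card = k},
      (Fin k ≃ P.1.parts)) : OrdPartition k m :=
  ⟨fun j => (x.2 j).1,
    fun j => x.1.1.ne_bot (x.2 j).2,
    fun a b hab => x.1.1.disjoint (x.2 a).2 (x.2 b).2
      fun h => hab (x.2.injective (Subtype.ext h)),
    fun y => by
      obtain ⟨t, ht, hy⟩ := x.1.1.exists_mem (Finset.mem_univ y)
      exact ⟨x.2.symm ⟨t, ht⟩, by simpa using hy⟩⟩

lemma ofLabelling_bijective (k m : ℕ) : Function.Bijective (ofLabelling k m) := by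
  constructor
  · rintro ⟨⟨P, hP⟩, e⟩ ⟨⟨Q, hQ⟩, f⟩ h
    have h' : ∀ j, (e j).1 = (f j).1 := fun j => congrFun (congrArg Subtype.val h) j
    have hPQ : P = Q := by
      ext1
      ext t
      constructor
      · intro ht
        have := h' (e.symm ⟨t, ht⟩)
        rw [Equiv.apply_symm_apply] at this
        rw [show t = _ from this]
        exact (f _).2
      · intro ht
        have := h' (f.symm ⟨t, ht⟩)
        rw [Equiv.apply_symm_apply] at this
        rw [← show _ = t from this]
        exact (e _).2
    subst hPQ
    have hef : e = f := Equiv.ext fun j => Subtype.ext (h' j)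
    rw [hef]
  · intro S
    refine ⟨⟨⟨S.toFinpartition, ?_⟩, Equiv.ofBijective
      (fun j => ⟨S.1 j, Finset.mem_image_of_mem _ (Finset.mem_univ j)⟩) ⟨?_, ?_⟩⟩, ?_⟩
    · change (Finset.univ.image S.1).card = k
      rw [Finset.card_image_of_injective _ S.injective, Finset.card_univ, Fintype.card_fin]
    · intro a b hab
      exact S.injective (congrArg Subtype.val hab)
    · rintro ⟨t, ht⟩
      obtain ⟨j, -, rfl⟩ := Finset.mem_image.1 ht
      exact ⟨j, rfl⟩
    · rfl

noncomputable def labelEquiv (k m : ℕ) :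
    (Σ P : {P : Finpartition (Finset.univ : Finset (Fin m)) // P.parts.card = k},
      (Fin k ≃ P.1.parts)) ≃ OrdPartition k m :=
  Equiv.ofBijective _ (ofLabelling_bijective k m)

lemma card_ordPartition (k m : ℕ) :
    Nat.card (OrdPartition k m) = k.factorial * stirling m k := by
  classical
  rw [← Nat.card_congr (labelEquiv k m), Nat.card_sigma]
  have h : ∀ P : {P : Finpartition (Finset.univ : Finset (Fin m)) // P.parts.card = k},
      Nat.card (Fin k ≃ P.1.parts) = k.factorial := by
    intro P
    rw [Nat.card_eq_fintype_card,
      Fintype.card_equiv (Fintype.equivOfCardEq (by simp [P.2])), Fintype.card_fin]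
  simp only [h, Finset.sum_const, Finset.card_univ, smul_eq_mul, stirling,
    Nat.card_eq_fintype_card]
  rw [mul_comm]

/-- Ordered partial partitions of `[N]` with `k` nonempty parts and `m` elements in total. -/
abbrev PartialOrdPartition (k N m : ℕ) : Type :=
  {S : Fin k → Finset (Fin N) //
    (∀ j, S j ≠ ∅) ∧ (∀ a b : Fin k, a ≠ b → Disjoint (S a) (S b)) ∧
      ∑ j, (S j).card = m}

lemma OrdPartition.sum_card {k m : ℕ} (S : OrdPartition k m) : ∑ j, (S.1 j).card = m := by
  rw [← Finset.card_biUnion fun a _ b _ hab => S.2.2.1 a b hab]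
  have : Finset.univ.biUnion S.1 = Finset.univ := by
    ext x
    simpa using S.2.2.2 x
  rw [this, Finset.card_univ, Fintype.card_fin]

/-- An ordered partition of `[m]` transported to an `m`-element subset `T` of `[N]` along the
increasing enumeration of `T`. -/
def transport (k N m : ℕ)
    (x : {T : Finset (Fin N) // T.card = m} × OrdPartition k m) : PartialOrdPartition k N m :=
  ⟨fun j => (x.2.1 j).map (x.1.1.orderEmbOfFin x.1.2).toEmbedding,
    fun j => by simpa using x.2.2.1 j,
    fun a b hab => by simpa using x.2.2.2.1 a b hab,
    by simpa using x.2.sum_card⟩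

lemma biUnion_transport (k N m : ℕ)
    (x : {T : Finset (Fin N) // T.card = m} × OrdPartition k m) :
    Finset.univ.biUnion (transport k N m x).1 = x.1.1 := by
  obtain ⟨⟨T, hT⟩, S⟩ := x
  ext y
  simp only [transport, Finset.mem_biUnion, Finset.mem_univ, true_and, Finset.mem_map]
  constructor
  · rintro ⟨j, z, -, rfl⟩
    exact T.orderEmbOfFin_mem hT z
  · intro hy
    have : y ∈ Set.range (T.orderEmbOfFin hT) := by simpa using hy
    obtain ⟨z, rfl⟩ := this
    obtain ⟨j, hj⟩ := S.2.2.2 z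
    exact ⟨j, z, hj, rfl⟩

lemma transport_bijective (k N m : ℕ) : Function.Bijective (transport k N m) := by
  constructor
  · intro x y h
    have hT : x.1 = y.1 := Subtype.ext <| by
      rw [← biUnion_transport, ← biUnion_transport, h]
    obtain ⟨T, S⟩ := x
    obtain ⟨T', S'⟩ := y
    obtain rfl : T = T' := hT
    have hS : S = S' := Subtype.ext <| funext fun j =>
      Finset.map_injective _ (congrFun (congrArg Subtype.val h) j)
    rw [hS]
  · rintro ⟨S, h0, hd, hc⟩
    have hT : (Finset.univ.biUnion S).card = m := by
      rw [Finset.card_biUnion fun a _ b _ hab => hd a b hab, hc]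
    set T := Finset.univ.biUnion S with hTdef
    -- the enumeration of the support hits every element of every part
    have hr : ∀ j, ∀ y ∈ S j, ∃ z, T.orderEmbOfFin hT z = y := by
      intro j y hy
      have : y ∈ Set.range (T.orderEmbOfFin hT) := by
        rw [Finset.range_orderEmbOfFin]
        exact Finset.mem_biUnion.2 ⟨j, Finset.mem_univ j, hy⟩
      exact this
    refine ⟨⟨⟨T, hT⟩, ⟨fun j => Finset.univ.filter fun z => T.orderEmbOfFin hT z ∈ S j,
      ?_, ?_, ?_⟩⟩, ?_⟩
    · intro j
      obtain ⟨y, hy⟩ := Finset.nonempty_iff_ne_empty.2 (h0 j)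
      obtain ⟨z, rfl⟩ := hr j y hy
      exact Finset.nonempty_iff_ne_empty.1 ⟨z, by simpa using hy⟩
    · intro a b hab
      rw [Finset.disjoint_left]
      intro z hz hz'
      exact Finset.disjoint_left.1 (hd a b hab) (Finset.mem_filter.1 hz).2
        (Finset.mem_filter.1 hz').2
    · intro z
      obtain ⟨j, -, hj⟩ := Finset.mem_biUnion.1 (T.orderEmbOfFin_mem hT z)
      exact ⟨j, by simpa using hj⟩
    · refine Subtype.ext (funext fun j => ?_)
      ext y
      simp only [transport, Finset.mem_map, Finset.mem_filter, Finset.mem_univ, true_and]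
      constructor
      · rintro ⟨z, hz, rfl⟩
        exact hz
      · intro hy
        obtain ⟨z, rfl⟩ := hr j y hy
        exact ⟨z, hy, rfl⟩

noncomputable def partialEquiv (k N m : ℕ) :
    {T : Finset (Fin N) // T.card = m} × OrdPartition k m ≃ PartialOrdPartition k N m :=
  Equiv.ofBijective _ (transport_bijective k N m)

lemma cellCount_eq (k N i : ℕ) :
    cellCount k N i = k.factorial * (N.choose (k + i) * stirling (k + i) k) := by
  have h : cellCount k N i = Nat.card (PartialOrdPartition k N (k + i)) := rfl
  rw [h, ← Nat.card_congr (partialEquiv k N (k + i)), Nat.card_prod, card_ordPartition,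
    Nat.card_eq_fintype_card, Fintype.card_finset_len, Fintype.card_fin]
  ring

/-- For `n ≥ 1` and `1 ≤ k ≤ n + 1`, the Euler characteristic of `D_k(Δ^n)` equals
`χ_{k,n} = k! · ∑_{i=0}^{n-k+1} (-1)^i C(n+1, k+i) S(k+i, k)`. -/
theorem eulerChar_eq_stirling_sum (n k : ℕ) (hn : 1 ≤ n) (hk1 : 1 ≤ k) (hk : k ≤ n + 1) :
    eulerCharV k (n + 1)
      = (Nat.factorial k : ℤ) * ∑ i ∈ Finset.range (n - k + 2),
          (-1 : ℤ) ^ i * ((n + 1).choose (k + i)) * (stirling (k + i) k : ℤ) := by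
  unfold eulerCharV
  rw [Finset.mul_sum]
  -- The terms beyond `i = n - k + 1` vanish. For `k = n + 1` the truncated `n - k + 2` is `2`,
  -- which only admits one more vanishing term.
  have hsub : Finset.range (n - k + 2) ⊆ Finset.range (n + 1 + 1) :=
    Finset.range_subset_range.2 (by omega)
  rw [← Finset.sum_subset hsub]
  · refine Finset.sum_congr rfl fun i _ => ?_
    rw [cellCount_eq]
    push_cast
    ring
  · intro i _ hi
    rw [cellCount_eq, Nat.choose_eq_zero_of_lt (by simp only [Finset.mem_range] at hi; omega)]
    simp
end
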